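/- Let m ≥ 2 and λ = (m−2)/2. For all x, y ∈ ℝ^m∖{0} and all r > 0: ∫_{S^{m−1}} conj(K_−(rη, x)) K_−(y, rη) dω(η) = 2^λ Γ(λ+1) u^{−λ} J_λ(u), where u = r √(|x|² + |y|² − 2⟨x,y⟩) = r|x−y|, dω is the rotation-invariant probability measure on the unit sphere S^{m−1}, conj denotes complex conjugation of the Cl_{0,m}⊗ℂ coefficients, and the product is taken in Cl_{0,m}⊗ℂ. -/

import Mathlib

open scoped BigOperators
open MeasureTheory

noncomputable section

namespace CliffordFourier

/-- Concrete model of the complexified Clifford algebra `Cl_{0,m} ⊗ ℂ`: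
an element is the family of its complex coefficients on the canonical basis
`e_S = e_{i₁} ⋯ e_{i_k}` (for `S = {i₁ < … < i_k} ⊆ {0,…,m-1}`). -/
def Cl (m : ℕ) : Type := Finset (Fin m) → ℂ

variable {m : ℕ}

instance : NormedAddCommGroup (Cl m) :=
  inferInstanceAs (NormedAddCommGroup (Finset (Fin m) → ℂ))
instance : NormedSpace ℝ (Cl m) :=
  inferInstanceAs (NormedSpace ℝ (Finset (Fin m) → ℂ))
instance : Module ℂ (Cl m) := inferInstanceAs (Module ℂ (Finset (Fin m) → ℂ))
instance : CompleteSpace (Cl m) := inferInstanceAs (CompleteSpace (Finset (Fin m) → ℂ))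

/-- The coefficient of `a` on the basis element `e_S`. -/
def coeff (a : Cl m) : Finset (Fin m) → ℂ := a

/-- Build an element of the Clifford algebra from its coefficients. -/
def ofCoeff (f : Finset (Fin m) → ℂ) : Cl m := f

/-- `1 = e_∅`. -/
instance : One (Cl m) := ⟨ofCoeff fun S => if S = (∅ : Finset (Fin m)) then 1 else 0⟩

/-- Clifford multiplication, determined by the relations `e_i e_j = - e_j e_i` (`i ≠ j`)
and `e_i² = -1`; on basis elements it is given by
`e_T · e_U = (-1)^{#{(t,u) ∈ T×U : u < t}} · (-1)^{#(T∩U)} · e_{T Δ U}`. -/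
instance : Mul (Cl m) :=
  ⟨fun a b => ofCoeff fun S => ∑ T : Finset (Fin m),
    ((-1 : ℂ) ^ ((((T ×ˢ (symmDiff T S)).filter fun p : Fin m × Fin m => p.2 < p.1).card)
        + (T ∩ (symmDiff T S)).card))
      * coeff a T * coeff b (symmDiff T S)⟩

/-- The generator `e_i`. -/
def e (m : ℕ) (i : Fin m) : Cl m := ofCoeff fun S => if S = {i} then 1 else 0

/-- The embedding of a vector `x ∈ ℝ^m` as `x = Σ_i x_i e_i` in the Clifford algebra. -/
def vec (m : ℕ) (x : Fin m → ℝ) : Cl m := ∑ i : Fin m, (x i : ℂ) • e m i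

/-- The Euclidean inner product `⟨x,y⟩ = Σ_i x_i y_i`. -/
def ip (x y : Fin m → ℝ) : ℝ := ∑ i, x i * y i

/-- The Euclidean norm `|x|`. -/
def nrm (x : Fin m → ℝ) : ℝ := Real.sqrt (ip x x)

/-- The wedge product `x∧y = Σ_{j<k} e_j e_k (x_j y_k - x_k y_j)`. -/
def wedge (m : ℕ) (x y : Fin m → ℝ) : Cl m :=
  ∑ j : Fin m, ∑ k : Fin m,
    if j < k then ((x j * y k - x k * y j : ℝ) : ℂ) • (e m j * e m k) else 0

/-- Complex conjugation of the coefficients. -/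
def cconj (a : Cl m) : Cl m := ofCoeff fun S => starRingEnd ℂ (coeff a S)

/-- The Gegenbauer polynomial `C_k^λ(w)`, defined through the standard three-term
recurrence, equivalent to the generating function `(1-2wt+t²)^{-λ} = Σ_k C_k^λ(w) t^k`. -/
def geg (lam : ℝ) : ℕ → ℝ → ℝ
  | 0, _ => 1
  | 1, w => 2 * lam * w
  | (k+2), w => (2 * ((k : ℝ) + 1 + lam) * w * geg lam (k+1) w
      - ((k : ℝ) + 2 * lam) * geg lam k w) / ((k : ℝ) + 2)

/-- The Bessel function of the first kind
`J_a(z) = Σ_{j≥0} (-1)^j (z/2)^{2j+a} / (j! Γ(j+a+1))`. -/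
def besselJ (a z : ℝ) : ℝ :=
  ∑' j : ℕ, ((-1 : ℝ)^j * (z/2) ^ (2*(j:ℝ) + a)) / (j.factorial * Real.Gamma ((j : ℝ) + a + 1))

/-- The entire function `J̃_a(t) = t^{-a} J_a(t) = Σ_{j≥0} (-1)^j (t/2)^{2j} / (j! Γ(j+a+1) 2^a)`
(for `t > 0` this is literally `t^{-a} J_a(t)`). -/
def besselJt (a t : ℝ) : ℝ :=
  ∑' j : ℕ, ((-1 : ℝ)^j * (t/2) ^ (2*j)) / (j.factorial * Real.Gamma ((j : ℝ) + a + 1) * (2:ℝ)^a)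

/-- The renormalized Gegenbauer polynomial `((k+λ)/λ) C_k^λ = C_k^{λ+1} - C_{k-2}^{λ+1}`
(the right-hand side also makes sense for `λ = 0`, i.e. `m = 2`). -/
def gegT (lam : ℝ) (k : ℕ) (w : ℝ) : ℝ :=
  geg (lam + 1) k w - (if 2 ≤ k then geg (lam + 1) (k - 2) w else 0)

/-- `A_λ(w,z) = 2^{λ-1} Γ(λ+1) Σ_{k≥0} (u + (-1)^k) z^{-λ} J_{k+λ}(z) C_k^λ(w)`, where `u = i^m`;
here written using `z^{-λ} J_{k+λ}(z) = z^k J̃_{k+λ}(z)`, which makes the formula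
well defined for all `z ≥ 0` (and all `m ≥ 2`). -/
def AfunR (u : ℂ) (lam w z : ℝ) : ℂ :=
  (((2:ℝ)^(lam - 1) * Real.Gamma (lam + 1) : ℝ) : ℂ) *
    ∑' k : ℕ, (u + (-1 : ℂ)^k) * ((z^k * besselJt ((k : ℝ) + lam) z * geg lam k w : ℝ) : ℂ)

/-- `B_λ(w,z) = -2^{λ-1} Γ(λ) Σ_{k≥0} (k+λ)(u - (-1)^k) z^{-λ} J_{k+λ}(z) C_k^λ(w)`;
here written using `Γ(λ)(k+λ)C_k^λ = Γ(λ+1)(C_k^{λ+1} - C_{k-2}^{λ+1})` and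
`z^{-λ} J_{k+λ}(z) = z^k J̃_{k+λ}(z)`, which makes the formula well defined
for all `z ≥ 0` and all `m ≥ 2` (including `λ = 0`). -/
def BfunR (u : ℂ) (lam w z : ℝ) : ℂ :=
  -(((2:ℝ)^(lam - 1) * Real.Gamma (lam + 1) : ℝ) : ℂ) *
    ∑' k : ℕ, (u - (-1 : ℂ)^k) * ((z^k * besselJt ((k : ℝ) + lam) z * gegT lam k w : ℝ) : ℂ)

/-- `C_λ(w,z) = -2^{λ-1} Γ(λ) Σ_{k≥0} (u + (-1)^k) z^{-λ-1} J_{k+λ}(z) (C_k^λ)'(w)`;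
here written using `Γ(λ) (C_k^λ)' = 2 Γ(λ+1) C_{k-1}^{λ+1}` and
`z^{-λ-1} J_{k+λ}(z) = z^{k-1} J̃_{k+λ}(z)`, which makes the formula well defined
for all `z ≥ 0` and all `m ≥ 2` (including `λ = 0`). -/
def CfunR (u : ℂ) (lam w z : ℝ) : ℂ :=
  -(((2:ℝ)^lam * Real.Gamma (lam + 1) : ℝ) : ℂ) *
    ∑' k : ℕ, (u + (-1 : ℂ)^k) *
      ((z^(k - 1) * besselJt ((k : ℝ) + lam) z
        * (if 1 ≤ k then geg (lam + 1) (k - 1) w else 0) : ℝ) : ℂ)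

/-- The Clifford-Fourier kernel
`K_-(x,y) = A_λ(w,z) + B_λ(w,z) + (x∧y) C_λ(w,z)`
with `λ = (m-2)/2`, `z = |x||y|`, `w = ⟨x,y⟩/(|x||y|)`. -/
def Kminus (m : ℕ) (x y : Fin m → ℝ) : Cl m :=
  (AfunR (Complex.I ^ m) (((m:ℝ) - 2)/2) (ip x y / (nrm x * nrm y)) (nrm x * nrm y)
    + BfunR (Complex.I ^ m) (((m:ℝ) - 2)/2) (ip x y / (nrm x * nrm y)) (nrm x * nrm y)) • (1 : Cl m)
  + CfunR (Complex.I ^ m) (((m:ℝ) - 2)/2) (ip x y / (nrm x * nrm y)) (nrm x * nrm y) • wedge m x y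

/-! ### Gegenbauer algebra -/

def dgeg (lam : ℝ) : ℕ → ℝ → ℝ
  | 0, _ => 0
  | 1, _ => 2 * lam
  | (k+2), w => (2 * ((k : ℝ) + 1 + lam) * (geg lam (k+1) w + w * dgeg lam (k+1) w)
      - ((k : ℝ) + 2 * lam) * dgeg lam k w) / ((k : ℝ) + 2)

theorem geg_rec (lam : ℝ) (k : ℕ) (w : ℝ) : ((k:ℝ)+2) * geg lam (k+2) w =
    2 * ((k : ℝ) + 1 + lam) * w * geg lam (k+1) w - ((k : ℝ) + 2 * lam) * geg lam k w := by
  rw [geg]; field_simp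

theorem dgeg_rec (lam : ℝ) (k : ℕ) (w : ℝ) : ((k:ℝ)+2) * dgeg lam (k+2) w =
    2 * ((k : ℝ) + 1 + lam) * (geg lam (k+1) w + w * dgeg lam (k+1) w)
      - ((k : ℝ) + 2 * lam) * dgeg lam k w := by
  rw [dgeg]; field_simp

theorem hasDerivAt_geg (lam : ℝ) (w : ℝ) : ∀ k : ℕ, HasDerivAt (geg lam k) (dgeg lam k w) w ∧
    HasDerivAt (geg lam (k+1)) (dgeg lam (k+1) w) w := by
  intro k
  induction k with
  | zero =>
    constructor
    · have : geg lam 0 = fun _ => 1 := by funext; rw [geg]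
      rw [this, dgeg]; exact hasDerivAt_const _ _
    · have : geg lam 1 = fun w => 2 * lam * w := by funext; rw [geg]
      rw [this, dgeg]; simpa using (hasDerivAt_id w).const_mul (2*lam)
  | succ k ih =>
    refine ⟨ih.2, ?_⟩
    have : geg lam (k+2) = fun w => (2 * ((k : ℝ) + 1 + lam) * w * geg lam (k+1) w
      - ((k : ℝ) + 2 * lam) * geg lam k w) / ((k : ℝ) + 2) := by funext; rw [geg]
    change HasDerivAt (geg lam (k+2)) (dgeg lam (k+2) w) w
    rw [this, dgeg]
    have h1 := (((hasDerivAt_id w).const_mul (2 * ((k : ℝ) + 1 + lam))).mul ih.2).sub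
      (ih.1.const_mul ((k : ℝ) + 2 * lam))
    refine (h1.div_const ((k:ℝ)+2)).congr_deriv ?_
    simp; ring

theorem continuous_geg (lam : ℝ) (k : ℕ) : Continuous (geg lam k) :=
  continuous_iff_continuousAt.2 fun w => (hasDerivAt_geg lam w k).1.continuousAt

theorem continuous_dgeg (lam : ℝ) : ∀ k : ℕ, Continuous (dgeg lam k) ∧
    Continuous (dgeg lam (k+1)) := by
  intro k
  induction k with
  | zero =>
    constructor
    · have : dgeg lam 0 = fun _ => 0 := by funext; rw [dgeg]
      rw [this]; exact continuous_const
    · have : dgeg lam 1 = fun w => 2 * lam := by funext; rw [dgeg]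
      rw [this]; exact continuous_const
  | succ k ih =>
    refine ⟨ih.2, ?_⟩
    have : dgeg lam (k+2) = fun w =>
      (2 * ((k : ℝ) + 1 + lam) * (geg lam (k+1) w + w * dgeg lam (k+1) w)
      - ((k : ℝ) + 2 * lam) * dgeg lam k w) / ((k : ℝ) + 2) := by funext; rw [dgeg]
    change Continuous (dgeg lam (k+2))
    rw [this]
    have := ih.1
    have := ih.2
    have := continuous_geg lam (k+1)
    fun_prop

theorem dgeg_bc (μ w : ℝ) (k : ℕ) :
    w * dgeg μ (k+1) w - dgeg μ k w = ((k:ℝ)+1) * geg μ (k+1) w ∧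
    dgeg μ (k+1) w = w * dgeg μ k w + ((k:ℝ)+2*μ) * geg μ k w := by
  induction k with
  | zero =>
    simp only [dgeg, geg]
    constructor <;> push_cast <;> ring
  | succ k ih =>
    obtain ⟨b, c⟩ := ih
    have r := geg_rec μ k w
    have d := dgeg_rec μ k w
    have hk : ((k:ℝ)+2) ≠ 0 := by positivity
    have c2 : dgeg μ (k+2) w = w * dgeg μ (k+1) w + ((k:ℝ)+1+2*μ) * geg μ (k+1) w := by
      apply mul_left_cancel₀ hk
      linear_combination d + (k+2*μ) * b
    refine ⟨?_, ?_⟩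
    · push_cast
      change w * dgeg μ (k+2) w - dgeg μ (k+1) w = ((k:ℝ)+1+1) * geg μ (k+2) w
      linear_combination w * c2 + w * b - c - r
    · push_cast; exact c2

/-- `D_{k-1}`. -/
def Dg (lam : ℝ) (k : ℕ) (w : ℝ) : ℝ := if 1 ≤ k then geg (lam + 1) (k - 1) w else 0

def dDg (lam : ℝ) (k : ℕ) (w : ℝ) : ℝ := if 1 ≤ k then dgeg (lam + 1) (k - 1) w else 0

theorem Dg_zero (lam w : ℝ) : Dg lam 0 w = 0 := by simp [Dg]
theorem Dg_succ (lam w : ℝ) (k : ℕ) : Dg lam (k+1) w = geg (lam+1) k w := by simp [Dg]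
theorem dDg_succ (lam w : ℝ) (k : ℕ) : dDg lam (k+1) w = dgeg (lam+1) k w := by simp [dDg]

theorem gegT_zero (lam w : ℝ) : gegT lam 0 w = 1 := by simp [gegT, geg]

theorem Dg_succ_eq (lam w : ℝ) (k : ℕ) : Dg lam (k+1) w = gegT lam k w + Dg lam (k-1) w := by
  rcases k with _ | _ | k
  · simp [Dg, gegT]
  · simp [Dg, gegT]
  · simp [Dg, gegT]

theorem hasDerivAt_Dg (lam w : ℝ) (k : ℕ) : HasDerivAt (Dg lam k) (dDg lam k w) w := by
  rcases k with _ | k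
  · have : Dg lam 0 = fun _ => 0 := by funext; simp [Dg]
    rw [this]; simpa [dDg] using hasDerivAt_const w (0:ℝ)
  · have : Dg lam (k+1) = geg (lam+1) k := by funext; simp [Dg]
    rw [this, dDg_succ]; exact (hasDerivAt_geg _ _ k).1

theorem continuous_Dg (lam : ℝ) (k : ℕ) : Continuous (Dg lam k) :=
  continuous_iff_continuousAt.2 fun w => (hasDerivAt_Dg lam w k).continuousAt

theorem continuous_dDg (lam : ℝ) (k : ℕ) : Continuous (dDg lam k) := by
  rcases k with _ | k
  · have : dDg lam 0 = fun _ => 0 := by funext; simp [dDg]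
    rw [this]; exact continuous_const
  · have : dDg lam (k+1) = dgeg (lam+1) k := by funext; simp [dDg]
    rw [this]; exact (continuous_dgeg _ k).1

theorem gegT_eq (lam : ℝ) (k : ℕ) : gegT lam k = fun w => Dg lam (k+1) w - Dg lam (k-1) w := by
  funext w; rw [Dg_succ_eq]; ring

theorem hasDerivAt_gegT (lam w : ℝ) (k : ℕ) :
    HasDerivAt (gegT lam k) (2*(k+lam) * Dg lam k w) w := by
  have h := (hasDerivAt_Dg lam w (k+1)).sub (hasDerivAt_Dg lam w (k-1))
  rw [gegT_eq]
  refine h.congr_deriv ?_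
  rcases k with _ | _ | k
  · simp [dDg, Dg, dgeg]
  · simp [dDg, Dg, dgeg, geg]; ring
  · have b := (dgeg_bc (lam+1) w k).1
    have c := (dgeg_bc (lam+1) w (k+1)).2
    simp [dDg, Dg]
    push_cast at c
    linear_combination c + b

theorem continuous_gegT (lam : ℝ) (k : ℕ) : Continuous (gegT lam k) :=
  continuous_iff_continuousAt.2 fun w => (hasDerivAt_gegT lam w k).continuousAt

theorem G5 {lam : ℝ} (hl : 0 ≤ lam) (w : ℝ) (k : ℕ) :
    w * Dg lam k w = k / (2*(k+lam)) * gegT lam k w + Dg lam (k-1) w := by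
  rcases k with _ | _ | k
  · simp [Dg]
  · simp [Dg, gegT, geg]; field_simp; ring
  · have r := geg_rec (lam+1) k w
    simp [Dg, gegT]
    have h : (k:ℝ)+1+1+lam ≠ 0 := by positivity
    field_simp
    linear_combination -r

theorem G2 {lam : ℝ} (hl : 0 ≤ lam) (w : ℝ) (k : ℕ) :
    (1-w^2) * dDg lam k w - (2*lam+1) * w * Dg lam k w
      = -(k*(k+2*lam)/(2*(k+lam))) * gegT lam k w := by
  rcases k with _ | k
  · simp [Dg, dDg]
  · obtain ⟨b, c⟩ := dgeg_bc (lam+1) w k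
    have g := G5 hl w (k+1)
    have s := Dg_succ_eq lam w (k+1)
    rw [Dg_succ] at g s
    rw [Dg_succ, dDg_succ]
    push_cast at *
    have h : (k:ℝ)+1+lam ≠ 0 := by positivity
    have e : ((k:ℝ)+1)*((k:ℝ)+1+2*lam)/(2*((k:ℝ)+1+lam)) =
      ((k:ℝ)+1) - (k+1)*(((k:ℝ)+1)/(2*((k:ℝ)+1+lam))) := by field_simp; ring
    rw [e]
    linear_combination w*c - b - ((k:ℝ)+1)*s + ((k:ℝ)+1)*g

theorem G3 {lam : ℝ} (hl : 0 ≤ lam) (w : ℝ) (k : ℕ) :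
    geg lam k w * (k+lam) = lam * gegT lam k w ∧
    geg lam (k+1) w * (k+1+lam) = lam * gegT lam (k+1) w := by
  induction k with
  | zero => simp [geg, gegT]; ring
  | succ k ih =>
    obtain ⟨h0, h1⟩ := ih
    refine ⟨by push_cast; exact h1, ?_⟩
    change geg lam (k+2) w * (((k+1:ℕ):ℝ)+1+lam) = lam * gegT lam (k+2) w
    rcases k with _ | k
    · simp [geg, gegT]; field_simp; ring
    · push_cast at *
      have r := geg_rec lam (k+1) w
      have g3 := G5 hl w (k+1+2)
      have g1 := G5 hl w (k+1)
      have s1 := Dg_succ_eq lam w (k+1)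
      have s2 := Dg_succ_eq lam w (k+1+1)
      simp only [Nat.add_sub_cancel, show k+1+2-1 = k+1+1 from rfl, show k+1+2 = k+1+1+1 from rfl] at *
      push_cast at *
      have p1 : (k:ℝ)+1+lam ≠ 0 := by positivity
      have p3 : (k:ℝ)+1+1+1+lam ≠ 0 := by positivity
      have p2 : (k:ℝ)+1+2 ≠ 0 := by positivity
      have q : ((k:ℝ)+1+2*lam) * geg lam (k+1) w
          = 2*lam*gegT lam (k+1) w - 2*lam*(((k:ℝ)+1)/(2*((k:ℝ)+1+lam)) * gegT lam (k+1) w) := by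
        field_simp
        linear_combination ((k:ℝ)+1+2*lam) * h0
      have z3 : ((k:ℝ)+1+1+1) * gegT lam (k+1+1+1) w = 2*((k:ℝ)+1+1+1+lam) *
          (w * Dg lam (k+1+1+1) w - Dg lam (k+1+1) w) := by
        rw [g3]; field_simp; ring
      apply mul_left_cancel₀ p2
      have p4 : gegT lam (k+1+1) w = Dg lam (k+1+1+1) w - Dg lam (k+1) w := by linarith
      have p5 : gegT lam (k+1) w = Dg lam (k+1+1) w - Dg lam k w := by linarith
      linear_combination ((k:ℝ)+1+1+1+lam) * (r - q + 2 * w * h1 + 2*lam*w*p4 - 2*lam*p5 - 2*lam*g1) - lam * z3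

theorem geg_bound {μ : ℝ} (hμ : 0 ≤ μ) {w : ℝ} (hw : |w| ≤ 1) (k : ℕ) :
    |geg μ k w| ≤ (4*(1+μ))^k ∧ |geg μ (k+1) w| ≤ (4*(1+μ))^(k+1) := by
  induction k with
  | zero =>
    simp only [geg, pow_zero, pow_one, abs_one, le_refl, true_and, zero_add]
    rw [abs_mul, abs_of_nonneg (by positivity : 0 ≤ 2*μ)]
    nlinarith [abs_nonneg w]
  | succ k ih =>
    obtain ⟨h0, h1⟩ := ih
    refine ⟨h1, ?_⟩
    change |geg μ (k+2) w| ≤ (4*(1+μ))^(k+2)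
    rw [geg, abs_div, abs_of_pos (by positivity : (0:ℝ) < k+2), div_le_iff₀ (by positivity)]
    set B := 4*(1+μ) with hB
    have hBk : 0 ≤ B^k := by positivity
    have e1 : |2 * ((k:ℝ)+1+μ) * w * geg μ (k+1) w| ≤ 2*((k:ℝ)+1+μ) * B^(k+1) := by
      rw [abs_mul, abs_mul, abs_of_nonneg (by positivity : 0 ≤ 2*((k:ℝ)+1+μ))]
      have : |w| * |geg μ (k+1) w| ≤ 1 * B^(k+1) := by gcongr
      rw [mul_assoc]; gcongr; linarith
    have e2 : |((k:ℝ)+2*μ) * geg μ k w| ≤ ((k:ℝ)+2*μ)*B^k := by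
      rw [abs_mul, abs_of_nonneg (by positivity : 0 ≤ ((k:ℝ)+2*μ))]; gcongr
    refine (abs_sub _ _).trans ((add_le_add e1 e2).trans ?_)
    rw [pow_succ, pow_add]
    have hk : (0:ℝ) ≤ k := by positivity
    have : 2*((k:ℝ)+1+μ)*B + (k+2*μ) ≤ B^2*(k+2) := by
      rw [hB]; nlinarith [mul_nonneg hk hμ, mul_nonneg (mul_nonneg hk hμ) hμ]
    nlinarith [mul_le_mul_of_nonneg_left this hBk]

theorem Dg_bound {lam : ℝ} (hl : 0 ≤ lam) {w : ℝ} (hw : |w| ≤ 1) (k : ℕ) :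
    |Dg lam k w| ≤ (4*(2+lam))^k := by
  have h1 : 1 ≤ 4*(2+lam) := by linarith
  rcases k with _ | k
  · simp [Dg]
  · rw [Dg_succ]
    have := (geg_bound (by linarith : 0 ≤ lam+1) hw k).1
    rw [show 4*(1+(lam+1)) = 4*(2+lam) by ring] at this
    exact this.trans (pow_le_pow_right₀ h1 (Nat.le_succ k))

theorem gegT_bound {lam : ℝ} (hl : 0 ≤ lam) {w : ℝ} (hw : |w| ≤ 1) (k : ℕ) :
    |gegT lam k w| ≤ 2*(4*(2+lam))^(k+1) := by
  have h1 : 1 ≤ 4*(2+lam) := by linarith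
  rw [gegT_eq]
  have a := Dg_bound hl hw (k+1)
  have b := (Dg_bound hl hw (k-1)).trans (pow_le_pow_right₀ h1 (by omega : k-1 ≤ k+1))
  exact (abs_sub _ _).trans (by linarith)

theorem geg_bound' {lam : ℝ} (hl : 0 ≤ lam) {w : ℝ} (hw : |w| ≤ 1) (k : ℕ) :
    |geg lam k w| ≤ 2*(4*(2+lam))^(k+1) := by
  have h1 : 1 ≤ 4*(2+lam) := by linarith
  have a := (geg_bound hl hw k).1
  have b : (4*(1+lam))^k ≤ (4*(2+lam))^k := by gcongr; linarith
  have c := pow_le_pow_right₀ h1 (by omega : k ≤ k+1)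
  have d : 0 ≤ (4*(2+lam))^(k+1) := by positivity
  linarith


/-! ### The sphere measure -/

abbrev EE (m : ℕ) := EuclideanSpace ℝ (Fin m)
abbrev SS (m : ℕ) := Metric.sphere (0 : EuclideanSpace ℝ (Fin m)) 1

def om (m : ℕ) : Measure (SS m) :=
  (((volume : Measure (EuclideanSpace ℝ (Fin m))).toSphere Set.univ)⁻¹ •
          (volume : Measure (EuclideanSpace ℝ (Fin m))).toSphere)

theorem om_prob (hm : 2 ≤ m) : IsProbabilityMeasure (om m) := by
  constructor
  have : Nonempty (Fin m) := ⟨⟨0, by omega⟩⟩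
  have : Nontrivial (EE m) := inferInstance
  rw [om, Measure.smul_apply, smul_eq_mul]
  apply ENNReal.inv_mul_cancel
  · rw [Ne, Measure.measure_univ_eq_zero]
    exact Measure.toSphere_ne_zero _
  · exact measure_ne_top _ _

def sphMap (R : EE m ≃ₗᵢ[ℝ] EE m) : SS m ≃ₜ SS m where
  toFun η := ⟨R η, by simp⟩
  invFun η := ⟨R.symm η, by simp⟩
  left_inv η := by ext; simp
  right_inv η := by ext; simp
  continuous_toFun := by fun_prop
  continuous_invFun := by fun_prop

open scoped Pointwise in
theorem toSphere_pres (R : EE m ≃ₗᵢ[ℝ] EE m) :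
    MeasurePreserving (sphMap R) (volume : Measure (EE m)).toSphere
      (volume : Measure (EE m)).toSphere := by
  refine ⟨(sphMap R).continuous.measurable, ?_⟩
  ext s hs
  rw [Measure.map_apply (sphMap R).continuous.measurable hs,
    Measure.toSphere_apply' _ ((sphMap R).continuous.measurable hs), Measure.toSphere_apply' _ hs]
  congr 1
  have key := (show MeasurePreserving R.toMeasurableEquiv volume volume from
    R.measurePreserving).measure_preimage_equiv (Set.Ioo (0:ℝ) 1 • (((↑) : SS m → EE m) '' s))
  rw [← key]
  congr 1
  ext v
  simp only [Set.mem_smul, Set.mem_image, Set.mem_preimage]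
  constructor
  · rintro ⟨t, ht, _, ⟨η, hη, rfl⟩, rfl⟩
    exact ⟨t, ht, _, ⟨sphMap R η, hη, rfl⟩, by simp [sphMap]⟩
  · rintro ⟨t, ht, _, ⟨η, hη, rfl⟩, h⟩
    refine ⟨t, ht, _, ⟨(sphMap R).symm η, by simpa using hη, rfl⟩, ?_⟩
    apply R.injective
    have : R v = t • (η : EE m) := h.symm
    rw [this, map_smul]
    congr 1
    exact congrArg Subtype.val ((sphMap R).apply_symm_apply η)

theorem om_inv (R : EE m ≃ₗᵢ[ℝ] EE m) (F : EE m → ℝ) :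
    ∫ η : SS m, F (R η) ∂om m = ∫ η : SS m, F η ∂om m := by
  have h := toSphere_pres R
  rw [om, integral_smul_measure, integral_smul_measure]
  congr 1
  exact h.integral_comp (sphMap R).measurableEmbedding (fun η : SS m => F η)

theorem sph_integrable (hm : 2 ≤ m) {V : Type*} [NormedAddCommGroup V]
    (F : SS m → V) (hF : Continuous F) : Integrable F (om m) := by
  have := om_prob hm
  have : CompactSpace (SS m) := Metric.sphere.compactSpace _ _
  exact hF.integrable_of_hasCompactSupport (HasCompactSupport.of_compactSpace F)

theorem hasDerivAt_sph (hm : 2 ≤ m) (G G' : ℝ → EE m → ℝ)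
    (hG : ∀ a, Continuous (G a)) (hG' : Continuous (Function.uncurry G'))
    (h : ∀ a η, HasDerivAt (fun a => G a η) (G' a η) a) (a0 : ℝ) :
    HasDerivAt (fun a => ∫ η : SS m, G a η ∂om m) (∫ η : SS m, G' a0 η ∂om m) a0 := by
  have := om_prob hm
  have : CompactSpace (SS m) := Metric.sphere.compactSpace _ _
  have hc : IsCompact (Metric.closedBall a0 1 ×ˢ (Metric.sphere (0 : EE m) 1)) :=
    (isCompact_closedBall _ _).prod (isCompact_sphere _ _)
  obtain ⟨C, hC⟩ := hc.exists_bound_of_continuousOn hG'.continuousOn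
  refine (hasDerivAt_integral_of_dominated_loc_of_deriv_le (F := fun a (η : SS m) => G a η)
    (F' := fun a (η : SS m) => G' a η)
    (bound := fun _ => C) (s := Metric.closedBall a0 1) (Metric.closedBall_mem_nhds _ one_pos)
    ?_ ?_ ?_ ?_ ?_ ?_).2
  · exact Filter.Eventually.of_forall fun a =>
      (sph_integrable hm _ ((hG a).comp continuous_subtype_val)).aestronglyMeasurable
  · exact sph_integrable hm _ ((hG a0).comp continuous_subtype_val)
  · refine (sph_integrable hm (fun η : SS m => G' a0 η) ?_).aestronglyMeasurable
    exact hG'.comp (by fun_prop : Continuous fun η : SS m => (a0, (η : EE m)))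
  · exact Filter.Eventually.of_forall fun η a ha => hC (a, η) ⟨ha, η.2⟩
  · exact integrable_const _
  · exact Filter.Eventually.of_forall fun η a _ => h a η

local notation "⟪" x "," y "⟫" => inner ℝ x y

/-- rotation by reflections -/
def uvec (i j : Fin m) (a : ℝ) : EE m :=
  Real.cos a • EuclideanSpace.single i 1 + Real.sin a • EuclideanSpace.single j 1

theorem inner_uvec (i j : Fin m) (a : ℝ) (x : EE m) :
    ⟪uvec i j a, x⟫ = Real.cos a * x i + Real.sin a * x j := by
  simp [uvec, inner_add_left, inner_smul_left, EuclideanSpace.inner_single_left]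

theorem norm_uvec (i j : Fin m) (hij : i ≠ j) (a : ℝ) : ‖uvec i j a‖ = 1 := by
  have : ‖uvec i j a‖ ^ 2 = 1 := by
    rw [← real_inner_self_eq_norm_sq, inner_uvec]
    simp [uvec, hij, hij.symm]
    nlinarith [Real.sin_sq_add_cos_sq a]
  nlinarith [norm_nonneg (uvec i j a)]

def rot (i j : Fin m) (a : ℝ) : EE m ≃ₗᵢ[ℝ] EE m :=
  ((ℝ ∙ uvec i j 0)ᗮ.reflection).trans ((ℝ ∙ uvec i j a)ᗮ.reflection)

def rho (i j : Fin m) (x η : EE m) (a : ℝ) : ℝ :=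
  ⟪x, η⟫ - 2 * η i * x i - 2 * (-Real.cos a * η i + Real.sin a * η j) *
    (Real.cos a * x i + Real.sin a * x j)

def rho' (i j : Fin m) (x η : EE m) (a : ℝ) : ℝ :=
  - 2 * ((Real.sin a * η i + Real.cos a * η j) * (Real.cos a * x i + Real.sin a * x j)
    + (-Real.cos a * η i + Real.sin a * η j) * (- Real.sin a * x i + Real.cos a * x j))

theorem refl_unit (u η : EE m) (hu : ‖u‖ = 1) :
    (ℝ ∙ u)ᗮ.reflection η = η - (2 * ⟪u, η⟫) • u := by
  rw [Submodule.reflection_orthogonal_apply, Submodule.reflection_singleton_apply, hu]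
  simp [two_smul, two_mul, add_smul]

theorem inner_rot (i j : Fin m) (hij : i ≠ j) (x η : EE m) (a : ℝ) :
    ⟪x, rot i j a η⟫ = rho i j x η a := by
  rw [rot, LinearIsometryEquiv.trans_apply, refl_unit _ _ (norm_uvec i j hij 0),
    refl_unit _ _ (norm_uvec i j hij a), inner_sub_right, inner_sub_right, inner_smul_right,
    inner_smul_right, inner_sub_right, inner_smul_right, real_inner_comm (uvec i j 0) x,
    real_inner_comm (uvec i j a) x]
  simp only [inner_uvec, rho]
  simp [uvec, hij.symm]
  left
  ring

theorem hasDerivAt_rho (i j : Fin m) (x η : EE m) (a : ℝ) :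
    HasDerivAt (rho i j x η) (rho' i j x η a) a := by
  have c := Real.hasDerivAt_cos a
  have s := Real.hasDerivAt_sin a
  have h1 := ((c.neg.mul_const (η i)).add (s.mul_const (η j)))
  have h2 := ((c.mul_const (x i)).add (s.mul_const (x j)))
  have h := ((h1.const_mul 2).mul h2).const_sub (⟪x, η⟫ - 2 * η i * x i)
  refine h.congr_deriv ?_
  simp [rho']; ring

theorem cont_coord (i : Fin m) : Continuous (fun η : EE m => η i) := by fun_prop

theorem cont_rho (i j : Fin m) (x : EE m) :
    Continuous (fun p : ℝ × EE m => rho i j x p.2 p.1) := by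
  unfold rho; fun_prop

theorem cont_rho' (i j : Fin m) (x : EE m) :
    Continuous (fun p : ℝ × EE m => rho' i j x p.2 p.1) := by
  unfold rho'; fun_prop

theorem rot_gen (hm : 2 ≤ m) (f f' g g' : ℝ → ℝ) (hf : ∀ s, HasDerivAt f (f' s) s)
    (hg : ∀ s, HasDerivAt g (g' s) s) (hf' : Continuous f') (hg' : Continuous g')
    (x y : EE m) (i j : Fin m) :
    ∫ η : SS m, (((η:EE m) j - (η:EE m) i * (if i = j then 1 else 0)) * (f ⟪x, (η:EE m)⟫ * g ⟪y, (η:EE m)⟫)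
      + (η:EE m) i * (f' ⟪x, (η:EE m)⟫ * (((η:EE m) j) * x i - (η:EE m) i * x j) * g ⟪y, (η:EE m)⟫
        + f ⟪x, (η:EE m)⟫ * (g' ⟪y, (η:EE m)⟫ * ((η:EE m) j * y i - (η:EE m) i * y j)))) ∂om m = 0 := by
  by_cases hij : i = j
  · subst hij; simp
  have cf : Continuous f := continuous_iff_continuousAt.2 fun w => (hf w).continuousAt
  have cg : Continuous g := continuous_iff_continuousAt.2 fun w => (hg w).continuousAt
  set ei : EE m := EuclideanSpace.single i 1
  have hei : ∀ η : EE m, ⟪ei, η⟫ = η i := fun η => by simp [ei, EuclideanSpace.inner_single_left]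
  have key := hasDerivAt_sph hm
    (fun a η => rho i j ei η a * (f (rho i j x η a) * g (rho i j y η a)))
    (fun a η => rho' i j ei η a * (f (rho i j x η a) * g (rho i j y η a)) +
      rho i j ei η a * (f' (rho i j x η a) * rho' i j x η a * g (rho i j y η a)
        + f (rho i j x η a) * (g' (rho i j y η a) * rho' i j y η a)))
    (fun a => by
      have h1 : ∀ z, Continuous fun η : EE m => rho i j z η a := fun z =>
        (cont_rho i j z).comp (by fun_prop : Continuous fun η : EE m => (a, η))
      have := h1 ei; have := h1 x; have := h1 y
      fun_prop)
    (by
      have := cont_rho i j ei; have := cont_rho i j x; have := cont_rho i j y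
      have := cont_rho' i j ei; have := cont_rho' i j x; have := cont_rho' i j y
      simp only [Function.uncurry_def]
      fun_prop)
    (fun a η => by
      have h0 := hasDerivAt_rho i j ei η a
      have h1 := (hf (rho i j x η a)).comp a (hasDerivAt_rho i j x η a)
      have h2 := (hg (rho i j y η a)).comp a (hasDerivAt_rho i j y η a)
      exact h0.mul (h1.mul h2)) 0
  have cst : (fun a => ∫ η : SS m, rho i j ei η a * (f (rho i j x η a) * g (rho i j y η a)) ∂om m)
      = fun _ => ∫ η : SS m, (η:EE m) i * (f ⟪x, (η:EE m)⟫ * g ⟪y, (η:EE m)⟫) ∂om m := by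
    funext a
    have := om_inv (rot i j a) (fun η => ⟪ei, η⟫ * (f ⟪x, η⟫ * g ⟪y, η⟫))
    simp only [inner_rot i j hij] at this
    rw [this]
    simp only [hei]
  rw [cst] at key
  have z := key.unique (hasDerivAt_const _ _)
  have r0 : ∀ (z η : EE m), rho i j z η 0 = ⟪z, η⟫ := by intro z η; simp [rho]
  have r1 : ∀ (z η : EE m), rho' i j z η 0 = -2 * (η j * z i - η i * z j) := by
    intro z η; simp [rho']; ring
  have e1 : ei i = 1 := by simp [ei]
  have e2 : ei j = 0 := by simp [ei, Ne.symm hij]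
  have : ∀ c : ℝ, c = -2 * (-1/2 * c) := by intro c; ring
  simp only [r0, r1, hei, e1, e2] at z
  have z2 := congrArg (fun c => (-1/2 : ℝ) * c) z
  simp only [mul_zero, ← integral_const_mul] at z2
  refine Eq.trans ?_ z2
  congr 1
  funext η
  simp [hij]
  ring

theorem sum_sq_sphere (η : SS m) : ∑ i, (η : EE m) i * (η : EE m) i = 1 := by
  have h : ‖(η : EE m)‖ = 1 := by simp
  have := real_inner_self_eq_norm_sq (η : EE m)
  rw [h, PiLp.inner_apply] at this
  simpa [pow_two] using this

theorem inner_eq_sum (x y : EE m) : ⟪x, y⟫ = ∑ i, x i * y i := by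
  rw [PiLp.inner_apply]; simp [mul_comm]

/-- Integration by parts on the sphere. -/
theorem ibp (hm : 2 ≤ m) (f f' g g' : ℝ → ℝ) (hf : ∀ s, HasDerivAt f (f' s) s)
    (hg : ∀ s, HasDerivAt g (g' s) s) (hf' : Continuous f') (hg' : Continuous g')
    (x y : EE m) (hx : ‖x‖ = 1) :
    ∫ η : SS m, ((1 - ⟪x, (η:EE m)⟫^2) * f' ⟪x, (η:EE m)⟫ - ((m:ℝ)-1) * ⟪x, (η:EE m)⟫ * f ⟪x, (η:EE m)⟫)
       * g ⟪y, (η:EE m)⟫ ∂om m =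
    ∫ η : SS m, f ⟪x, (η:EE m)⟫ * g' ⟪y, (η:EE m)⟫ * (⟪x, (η:EE m)⟫ * ⟪y, (η:EE m)⟫ - ⟪x, y⟫) ∂om m := by
  have cf : Continuous f := continuous_iff_continuousAt.2 fun w => (hf w).continuousAt
  have cg : Continuous g := continuous_iff_continuousAt.2 fun w => (hg w).continuousAt
  have R := rot_gen hm f f' g g' hf hg hf' hg' x y
  have S : ∑ i, ∑ j, x j * (∫ η : SS m, (((η:EE m) j - (η:EE m) i * (if i = j then 1 else 0)) * (f ⟪x, (η:EE m)⟫ * g ⟪y, (η:EE m)⟫)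
      + (η:EE m) i * (f' ⟪x, (η:EE m)⟫ * (((η:EE m) j) * x i - (η:EE m) i * x j) * g ⟪y, (η:EE m)⟫
        + f ⟪x, (η:EE m)⟫ * (g' ⟪y, (η:EE m)⟫ * ((η:EE m) j * y i - (η:EE m) i * y j)))) ∂om m) = 0 := by
    simp only [R, mul_zero, Finset.sum_const_zero]
  simp only [← integral_const_mul] at S
  have S2 : ∑ i, (∫ η : SS m, ∑ j, x j * (((η:EE m) j - (η:EE m) i * (if i = j then 1 else 0)) * (f ⟪x, (η:EE m)⟫ * g ⟪y, (η:EE m)⟫)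
      + (η:EE m) i * (f' ⟪x, (η:EE m)⟫ * (((η:EE m) j) * x i - (η:EE m) i * x j) * g ⟪y, (η:EE m)⟫
        + f ⟪x, (η:EE m)⟫ * (g' ⟪y, (η:EE m)⟫ * ((η:EE m) j * y i - (η:EE m) i * y j)))) ∂om m) = 0 := by
    rw [← S]
    refine Finset.sum_congr rfl fun i _ => ?_
    rw [integral_finsetSum]
    intro j _
    exact sph_integrable hm _ (by fun_prop)
  rw [← integral_finsetSum] at S2
  swap
  · intro i _
    exact sph_integrable hm _ (by fun_prop)
  rw [← sub_eq_zero, ← integral_sub]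
  rotate_left
  · exact sph_integrable hm _ (by fun_prop)
  · exact sph_integrable hm _ (by fun_prop)
  rw [← neg_eq_zero, ← integral_neg, ← S2]
  congr 1
  funext η
  have h1 := sum_sq_sphere η
  have hxx : ∑ i, x i * x i = 1 := by rw [← inner_eq_sum, real_inner_self_eq_norm_sq, hx]; norm_num
  have hs := inner_eq_sum x (η : EE m)
  have ht := inner_eq_sum y (η : EE m)
  have hw := inner_eq_sum x y
  generalize f ⟪x, (η:EE m)⟫ = F
  generalize f' ⟪x, (η:EE m)⟫ = F'
  generalize g ⟪y, (η:EE m)⟫ = G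
  generalize g' ⟪y, (η:EE m)⟫ = G'
  have e : ∀ i j, x j * (((η:EE m) j - (η:EE m) i * (if i = j then 1 else 0)) * (F * G)
      + (η:EE m) i * (F' * (((η:EE m) j) * x i - (η:EE m) i * x j) * G
        + F * (G' * ((η:EE m) j * y i - (η:EE m) i * y j)))) =
      (x j * (η:EE m) j) * (F*G) - (if i = j then x j * (η:EE m) i else 0) * (F * G)
      + F'*G*((x j * (η:EE m) j) * (x i * (η:EE m) i)) - F'*G*((x j * x j) * ((η:EE m) i * (η:EE m) i))
      + F*G'*((x j * (η:EE m) j) * (y i * (η:EE m) i)) - F*G'*((x j * y j) * ((η:EE m) i * (η:EE m) i)) := by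
    intro i j
    split_ifs <;> ring
  simp only [e, Finset.sum_add_distrib, Finset.sum_sub_distrib, ← Finset.mul_sum, ← Finset.sum_mul,
    h1, hxx, ← hs, ← ht, ← hw]
  simp [← hs]
  ring


/-! ### Orthogonality of zonal functions -/


theorem E1 (hm : 2 ≤ m) {lam : ℝ} (hl : 0 ≤ lam) (hlm : 2*lam+1 = (m:ℝ)-1) (k l : ℕ) (x y : EE m)
    (hx : ‖x‖ = 1) :
    -(k*(k+2*lam)/(2*(k+lam))) * ∫ η : SS m, gegT lam k ⟪x, (η:EE m)⟫ * gegT lam l ⟪y, (η:EE m)⟫ ∂om m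
     = 2*(l+lam) * ∫ η : SS m, Dg lam k ⟪x, (η:EE m)⟫ * Dg lam l ⟪y, (η:EE m)⟫ *
        (⟪x, (η:EE m)⟫ * ⟪y, (η:EE m)⟫ - ⟪x, y⟫) ∂om m := by
  have h := ibp hm (Dg lam k) (dDg lam k) (gegT lam l) (fun w => 2*(l+lam) * Dg lam l w)
    (fun s => hasDerivAt_Dg lam s k) (fun s => hasDerivAt_gegT lam s l) (continuous_dDg lam k)
    (continuous_const.mul (continuous_Dg lam l)) x y hx
  rw [← integral_const_mul, ← integral_const_mul]
  refine Eq.trans ?_ (h.trans ?_)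
  · congr 1; funext η
    rw [← hlm, G2 hl]; ring
  · congr 1; funext η; ring

theorem N_orth (hm : 2 ≤ m) {lam : ℝ} (hl : 0 ≤ lam) (hlm : 2*lam+1 = (m:ℝ)-1) (k l : ℕ) (x y : EE m)
    (hx : ‖x‖ = 1) (hy : ‖y‖ = 1) (hkl : k ≠ l) :
    ∫ η : SS m, gegT lam k ⟪x, (η:EE m)⟫ * gegT lam l ⟪y, (η:EE m)⟫ ∂om m = 0 := by
  have h1 := E1 hm hl hlm k l x y hx
  have h2 := E1 hm hl hlm l k y x hy
  have e1 : ∫ η : SS m, gegT lam l ⟪y, (η:EE m)⟫ * gegT lam k ⟪x, (η:EE m)⟫ ∂om m =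
    ∫ η : SS m, gegT lam k ⟪x, (η:EE m)⟫ * gegT lam l ⟪y, (η:EE m)⟫ ∂om m := by
    congr 1; funext η; ring
  have e2 : ∫ η : SS m, Dg lam l ⟪y, (η:EE m)⟫ * Dg lam k ⟪x, (η:EE m)⟫ *
        (⟪y, (η:EE m)⟫ * ⟪x, (η:EE m)⟫ - ⟪y, x⟫) ∂om m =
    ∫ η : SS m, Dg lam k ⟪x, (η:EE m)⟫ * Dg lam l ⟪y, (η:EE m)⟫ *
        (⟪x, (η:EE m)⟫ * ⟪y, (η:EE m)⟫ - ⟪x, y⟫) ∂om m := by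
    congr 1; funext η; rw [real_inner_comm y x]; ring
  rw [e1, e2] at h2
  generalize (∫ η : SS m, gegT lam k ⟪x, (η:EE m)⟫ * gegT lam l ⟪y, (η:EE m)⟫ ∂om m) = N at *
  generalize (∫ η : SS m, Dg lam k ⟪x, (η:EE m)⟫ * Dg lam l ⟪y, (η:EE m)⟫ *
        (⟪x, (η:EE m)⟫ * ⟪y, (η:EE m)⟫ - ⟪x, y⟫) ∂om m) = Q at *
  have q : ∀ k : ℕ, (k+lam) * (k*(k+2*lam)/(2*(k+lam))) = k*(k+2*lam)/2 := by
    intro k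
    by_cases h : (k:ℝ)+lam = 0
    · have : (k:ℝ) = 0 := by have : (0:ℝ) ≤ k := by positivity
                             linarith
      simp [this]
    · field_simp
  have q1 := q k
  have q2 := q l
  have : ((k:ℝ)-l)*(k+l+2*lam)*N = 0 := by
    linear_combination (-2*(k+lam)) * h1 + 2*(l+lam)*h2 - 2*N*q1 + 2*N*q2
  have a1 : (k:ℝ)-l ≠ 0 := sub_ne_zero.2 (by exact_mod_cast hkl)
  have a2 : (k:ℝ)+l+2*lam ≠ 0 := by
    have : (1:ℝ) ≤ (k:ℝ)+l := by
      have : 1 ≤ k + l := by omega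
      exact_mod_cast this
    positivity
  simpa [a1, a2] using this

theorem cont_comp_inner {f : ℝ → ℝ} (hf : Continuous f) (x : EE m) :
    Continuous fun η : SS m => f ⟪x, (η:EE m)⟫ := by fun_prop

theorem ZD_orth (hm : 2 ≤ m) {lam : ℝ} (hl : 0 ≤ lam) (hlm : 2*lam+1 = (m:ℝ)-1) (k : ℕ) (x y : EE m)
    (hx : ‖x‖ = 1) (hy : ‖y‖ = 1) (j : ℕ) (hj : j ≤ k) :
    ∫ η : SS m, gegT lam k ⟪x, (η:EE m)⟫ * Dg lam j ⟪y, (η:EE m)⟫ ∂om m = 0 := by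
  induction j using Nat.strong_induction_on with
  | _ j ih =>
    rcases j with _ | j
    · simp [Dg]
    · have h1 := N_orth hm hl hlm k j x y hx hy (by omega)
      have h2 := ih (j-1) (by omega) (by omega)
      simp only [Dg_succ_eq, mul_add]
      have c1 := cont_comp_inner (continuous_gegT lam k) x
      have c2 := cont_comp_inner (continuous_gegT lam j) y
      have c3 := cont_comp_inner (continuous_Dg lam (j-1)) y
      rw [integral_add, h1, h2, add_zero]
      all_goals exact sph_integrable hm _ (by fun_prop)

theorem diag_aux (hm : 2 ≤ m) {lam : ℝ} (hl : 0 ≤ lam) (hlm : 2*lam+1 = (m:ℝ)-1) (x y : EE m)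
    (hx : ‖x‖ = 1) (hy : ‖y‖ = 1) (k : ℕ)
    (T0 : ∫ η : SS m, Dg lam (k-1) ⟪x, (η:EE m)⟫ * Dg lam (k-1) ⟪y, (η:EE m)⟫ ∂om m = Dg lam (k-1) ⟪x, y⟫)
    (T1 : ∫ η : SS m, Dg lam k ⟪x, (η:EE m)⟫ * Dg lam k ⟪y, (η:EE m)⟫ ∂om m = Dg lam k ⟪x, y⟫) :
    ∫ η : SS m, gegT lam k ⟪x, (η:EE m)⟫ * gegT lam k ⟪y, (η:EE m)⟫ ∂om m = gegT lam k ⟪x, y⟫ := by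
  have := om_prob hm
  rcases Nat.eq_zero_or_pos k with rfl | hk
  · simp [gegT_zero]
  have h := E1 hm hl hlm k k x y hx
  have c1 := cont_comp_inner (continuous_gegT lam k) x
  have c2 := cont_comp_inner (continuous_gegT lam k) y
  have c3 := cont_comp_inner (continuous_Dg lam (k-1)) x
  have c4 := cont_comp_inner (continuous_Dg lam (k-1)) y
  have c5 := cont_comp_inner (continuous_Dg lam k) x
  have c6 := cont_comp_inner (continuous_Dg lam k) y
  set q : ℝ := k/(2*(k+lam)) with hq
  have o1 := ZD_orth hm hl hlm k x y hx hy (k-1) (by omega)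
  have o2 := ZD_orth hm hl hlm k y x hy hx (k-1) (by omega)
  have e : ∫ η : SS m, Dg lam k ⟪x, (η:EE m)⟫ * Dg lam k ⟪y, (η:EE m)⟫ *
        (⟪x, (η:EE m)⟫ * ⟪y, (η:EE m)⟫ - ⟪x, y⟫) ∂om m =
      q^2 * (∫ η : SS m, gegT lam k ⟪x, (η:EE m)⟫ * gegT lam k ⟪y, (η:EE m)⟫ ∂om m)
      + q * (∫ η : SS m, gegT lam k ⟪x, (η:EE m)⟫ * Dg lam (k-1) ⟪y, (η:EE m)⟫ ∂om m)
      + q * (∫ η : SS m, gegT lam k ⟪y, (η:EE m)⟫ * Dg lam (k-1) ⟪x, (η:EE m)⟫ ∂om m)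
      + (∫ η : SS m, Dg lam (k-1) ⟪x, (η:EE m)⟫ * Dg lam (k-1) ⟪y, (η:EE m)⟫ ∂om m)
      - ⟪x, y⟫ * (∫ η : SS m, Dg lam k ⟪x, (η:EE m)⟫ * Dg lam k ⟪y, (η:EE m)⟫ ∂om m) := by
    simp only [← integral_const_mul]
    rw [← integral_add, ← integral_add, ← integral_add, ← integral_sub]
    · congr 1; funext η
      have g1 := G5 hl ⟪x, (η:EE m)⟫ k
      have g2 := G5 hl ⟪y, (η:EE m)⟫ k
      rw [← hq] at g1 g2
      linear_combination (⟪y, (η:EE m)⟫ * Dg lam k ⟪y, (η:EE m)⟫) * g1 +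
        (q * gegT lam k ⟪x, (η:EE m)⟫ + Dg lam (k-1) ⟪x, (η:EE m)⟫) * g2
    all_goals exact sph_integrable hm _ (by fun_prop)
  rw [e, o1, o2, T0, T1] at h
  have g := G5 hl ⟪x, y⟫ k
  rw [← hq] at g
  generalize (∫ η : SS m, gegT lam k ⟪x, (η:EE m)⟫ * gegT lam k ⟪y, (η:EE m)⟫ ∂om m) = N at *
  have hk' : (0:ℝ) < k := by exact_mod_cast hk
  have hp : (0:ℝ) < k + lam := by positivity
  have hq0 : q ≠ 0 := by rw [hq]; positivity
  have a1 : (k*(k+2*lam)/(2*(k+lam)) : ℝ) = 2*(k+lam)*(q - q^2) := by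
    rw [hq]; field_simp; ring
  rw [a1] at h
  have h' : 2*((k:ℝ)+lam) * (q * N) = 2*((k:ℝ)+lam) * (q * gegT lam k ⟪x, y⟫) := by
    linear_combination -h + 2*((k:ℝ)+lam)*g
  have := mul_left_cancel₀ (by positivity) h'
  exact mul_left_cancel₀ hq0 this

theorem T_diag (hm : 2 ≤ m) {lam : ℝ} (hl : 0 ≤ lam) (hlm : 2*lam+1 = (m:ℝ)-1) (x y : EE m)
    (hx : ‖x‖ = 1) (hy : ‖y‖ = 1) (k : ℕ) :
    ∫ η : SS m, Dg lam k ⟪x, (η:EE m)⟫ * Dg lam k ⟪y, (η:EE m)⟫ ∂om m = Dg lam k ⟪x, y⟫ := by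
  induction k using Nat.strong_induction_on with
  | _ k ih =>
    rcases k with _ | k
    · simp [Dg]
    · have n := diag_aux hm hl hlm x y hx hy k (ih (k-1) (by omega)) (ih k (by omega))
      have t := ih (k-1) (by omega)
      have c1 := cont_comp_inner (continuous_gegT lam k) x
      have c2 := cont_comp_inner (continuous_gegT lam k) y
      have c3 := cont_comp_inner (continuous_Dg lam (k-1)) x
      have c4 := cont_comp_inner (continuous_Dg lam (k-1)) y
      have o1 := ZD_orth hm hl hlm k x y hx hy (k-1) (by omega)
      have o2 := ZD_orth hm hl hlm k y x hy hx (k-1) (by omega)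
      have e : ∫ η : SS m, Dg lam (k+1) ⟪x, (η:EE m)⟫ * Dg lam (k+1) ⟪y, (η:EE m)⟫ ∂om m =
        (∫ η : SS m, gegT lam k ⟪x, (η:EE m)⟫ * gegT lam k ⟪y, (η:EE m)⟫ ∂om m)
        + (∫ η : SS m, gegT lam k ⟪x, (η:EE m)⟫ * Dg lam (k-1) ⟪y, (η:EE m)⟫ ∂om m)
        + (∫ η : SS m, gegT lam k ⟪y, (η:EE m)⟫ * Dg lam (k-1) ⟪x, (η:EE m)⟫ ∂om m)
        + (∫ η : SS m, Dg lam (k-1) ⟪x, (η:EE m)⟫ * Dg lam (k-1) ⟪y, (η:EE m)⟫ ∂om m) := by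
        rw [← integral_add, ← integral_add, ← integral_add]
        · congr 1; funext η
          simp only [Dg_succ_eq]; ring
        all_goals exact sph_integrable hm _ (by fun_prop)
      rw [e, o1, o2, n, t, Dg_succ_eq]; ring

theorem N_eq (hm : 2 ≤ m) {lam : ℝ} (hl : 0 ≤ lam) (hlm : 2*lam+1 = (m:ℝ)-1) (k l : ℕ) (x y : EE m)
    (hx : ‖x‖ = 1) (hy : ‖y‖ = 1) :
    ∫ η : SS m, gegT lam k ⟪x, (η:EE m)⟫ * gegT lam l ⟪y, (η:EE m)⟫ ∂om m =
      if k = l then gegT lam k ⟪x, y⟫ else 0 := by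
  split_ifs with h
  · subst h
    exact diag_aux hm hl hlm x y hx hy k (T_diag hm hl hlm x y hx hy _) (T_diag hm hl hlm x y hx hy _)
  · exact N_orth hm hl hlm k l x y hx hy h

theorem curve_diff (hm : 2 ≤ m) (f f' : ℝ → ℝ) (hf : ∀ s, HasDerivAt f (f' s) s)
    (hf' : Continuous f') (h : EE m → ℝ) (hh : Continuous h) (Φ dΦ : EE m → ℝ)
    (x v : EE m) (hx : ‖x‖ = 1) (hv : ⟪x, v⟫ = 0)
    (H : ∀ x' : EE m, ‖x'‖ = 1 → ∫ η : SS m, f ⟪x', (η:EE m)⟫ * h η ∂om m = Φ x')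
    (hΦ : ∀ v, HasDerivAt (fun a => Φ (Real.cos a • x + Real.sin a • v)) (dΦ v) 0)
    (hs : ∀ (c : ℝ) v, dΦ (c • v) = c * dΦ v) :
    ∫ η : SS m, ⟪v, (η:EE m)⟫ * f' ⟪x, (η:EE m)⟫ * h η ∂om m = dΦ v := by
  have cf : Continuous f := continuous_iff_continuousAt.2 fun w => (hf w).continuousAt
  by_cases hv0 : v = 0
  · have := hs 0 0
    simp at this
    simp [hv0, this]
  have hn : ‖v‖ ≠ 0 := by simpa using hv0
  set u : EE m := ‖v‖⁻¹ • v with hu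
  have hvu : v = ‖v‖ • u := by rw [hu, smul_smul, mul_inv_cancel₀ hn, one_smul]
  have hun : ‖u‖ = 1 := by rw [hu, norm_smul]; simp [hn]
  have hxu : ⟪x, u⟫ = 0 := by rw [hu, inner_smul_right, hv, mul_zero]
  have unit : ∀ a : ℝ, ‖Real.cos a • x + Real.sin a • u‖ = 1 := by
    intro a
    have : ‖Real.cos a • x + Real.sin a • u‖^2 = 1 := by
      rw [norm_add_sq_real, inner_smul_left, inner_smul_right, hxu, norm_smul, norm_smul, hx, hun]
      simp [Real.cos_sq_add_sin_sq]
    nlinarith [norm_nonneg (Real.cos a • x + Real.sin a • u)]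
  have key := hasDerivAt_sph hm
    (fun a η => f (Real.cos a * ⟪x, η⟫ + Real.sin a * ⟪u, η⟫) * h η)
    (fun a η => f' (Real.cos a * ⟪x, η⟫ + Real.sin a * ⟪u, η⟫) *
      (-Real.sin a * ⟪x, η⟫ + Real.cos a * ⟪u, η⟫) * h η)
    (fun a => by fun_prop)
    (by simp only [Function.uncurry_def]; fun_prop)
    (fun a η => by
      have h1 := ((Real.hasDerivAt_cos a).mul_const ⟪x, η⟫).add ((Real.hasDerivAt_sin a).mul_const ⟪u, η⟫)
      exact ((hf _).comp a h1).mul_const (h η)) 0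
  have e : (fun a => ∫ η : SS m, f (Real.cos a * ⟪x, (η:EE m)⟫ + Real.sin a * ⟪u, (η:EE m)⟫) * h η ∂om m)
      = fun a => Φ (Real.cos a • x + Real.sin a • u) := by
    funext a
    rw [← H _ (unit a)]
    simp [inner_add_left, inner_smul_left]
  rw [e] at key
  have z := key.unique (hΦ u)
  rw [hvu, hs, ← z, ← integral_const_mul]
  congr 1; funext η
  simp [inner_smul_left]; ring

theorem V1 (hm : 2 ≤ m) {lam : ℝ} (hl : 0 ≤ lam) (hlm : 2*lam+1 = (m:ℝ)-1) (k l : ℕ) (x y v : EE m)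
    (hx : ‖x‖ = 1) (hy : ‖y‖ = 1) (hv : ⟪x, v⟫ = 0) :
    ∫ η : SS m, ⟪v, (η:EE m)⟫ * Dg lam k ⟪x, (η:EE m)⟫ * gegT lam l ⟪y, (η:EE m)⟫ ∂om m =
      if k = l then ⟪v, y⟫ * Dg lam k ⟪x, y⟫ else 0 := by
  rcases Nat.eq_zero_or_pos k with rfl | hk
  · simp [Dg]
  have hk' : (0:ℝ) < k := by exact_mod_cast hk
  have hp : (0:ℝ) < k + lam := by positivity
  have key := curve_diff hm (gegT lam k) (fun w => 2*(k+lam) * Dg lam k w)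
    (fun s => hasDerivAt_gegT lam s k) (continuous_const.mul (continuous_Dg lam k))
    (fun η => gegT lam l ⟪y, η⟫) (by have := continuous_gegT lam l; fun_prop)
    (fun x' => if k = l then gegT lam k ⟪x', y⟫ else 0)
    (fun v => if k = l then 2*(k+lam) * Dg lam k ⟪x, y⟫ * ⟪v, y⟫ else 0)
    x v hx hv (fun x' hx' => N_eq hm hl hlm k l x' y hx' hy)
    (by
      intro v
      split_ifs
      · have h1 := ((Real.hasDerivAt_cos 0).mul_const ⟪x, y⟫).add ((Real.hasDerivAt_sin 0).mul_const ⟪v, y⟫)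
        have h2 := (hasDerivAt_gegT lam (Real.cos 0 * ⟪x, y⟫ + Real.sin 0 * ⟪v, y⟫) k).comp 0 h1
        simp only [inner_add_left, inner_smul_left]
        refine h2.congr_deriv ?_
        simp
      · exact hasDerivAt_const _ _)
    (by intro c v; split_ifs <;> simp [inner_smul_left]; ring)
  apply mul_left_cancel₀ (by positivity : (2*((k:ℝ)+lam)) ≠ 0)
  rw [← integral_const_mul]
  refine Eq.trans ?_ (key.trans ?_)
  · congr 1; funext η; ring
  · split_ifs <;> ring

theorem V2 (hm : 2 ≤ m) {lam : ℝ} (hl : 0 ≤ lam) (hlm : 2*lam+1 = (m:ℝ)-1) (k l : ℕ) (x y v v' : EE m)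
    (hx : ‖x‖ = 1) (hy : ‖y‖ = 1) (hv : ⟪x, v⟫ = 0) (hv' : ⟪y, v'⟫ = 0) :
    ∫ η : SS m, (⟪v, (η:EE m)⟫ * ⟪v', (η:EE m)⟫) * (Dg lam k ⟪x, (η:EE m)⟫ * Dg lam l ⟪y, (η:EE m)⟫) ∂om m =
      if k = l then (⟪v, v'⟫ * Dg lam k ⟪x, y⟫ + ⟪v, y⟫ * ⟪x, v'⟫ * dDg lam k ⟪x, y⟫) / (2*(k+lam)) else 0 := by
  rcases Nat.eq_zero_or_pos l with rfl | hk
  · split_ifs with h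
    · subst h; simp [Dg, dDg]
    · simp [Dg]
  have hk' : (0:ℝ) < l := by exact_mod_cast hk
  have hp : (0:ℝ) < l + lam := by positivity
  have key := curve_diff hm (gegT lam l) (fun w => 2*(l+lam) * Dg lam l w)
    (fun s => hasDerivAt_gegT lam s l) (continuous_const.mul (continuous_Dg lam l))
    (fun η => ⟪v, η⟫ * Dg lam k ⟪x, η⟫) (by have := continuous_Dg lam k; fun_prop)
    (fun y' => if k = l then ⟪v, y'⟫ * Dg lam k ⟪x, y'⟫ else 0)
    (fun v' => if k = l then (⟪v, v'⟫ * Dg lam k ⟪x, y⟫ + ⟪v, y⟫ * (dDg lam k ⟪x, y⟫ * ⟪x, v'⟫)) else 0)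
    y v' hy hv' (fun y' hy' => by
      rw [← V1 hm hl hlm k l x y' v hx hy' hv]
      congr 1; funext η; ring)
    (by
      intro v'
      split_ifs
      · have h1 := ((Real.hasDerivAt_cos 0).mul_const ⟪x, y⟫).add ((Real.hasDerivAt_sin 0).mul_const ⟪x, v'⟫)
        have h0 := ((Real.hasDerivAt_cos 0).mul_const ⟪v, y⟫).add ((Real.hasDerivAt_sin 0).mul_const ⟪v, v'⟫)
        have h2 := (hasDerivAt_Dg lam (Real.cos 0 * ⟪x, y⟫ + Real.sin 0 * ⟪x, v'⟫) k).comp 0 h1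
        simp only [inner_add_right, inner_smul_right]
        refine (h0.mul h2).congr_deriv ?_
        simp
      · exact hasDerivAt_const _ _)
    (by intro c v; split_ifs <;> simp [inner_smul_right]; ring)
  apply mul_left_cancel₀ (by positivity : (2*((l:ℝ)+lam)) ≠ 0)
  rw [← integral_const_mul]
  refine Eq.trans ?_ (key.trans ?_)
  · congr 1; funext η; ring
  · split_ifs with h
    · subst h; field_simp
    · ring


/-! ### Plane wave expansion -/

theorem swap_sum (hm : 2 ≤ m) {V : Type*} [NormedAddCommGroup V] [NormedSpace ℝ V] [CompleteSpace V]
    (f : ℕ → SS m → V) (F : SS m → V) (b : ℕ → ℝ) (hf : ∀ k, Continuous (f k))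
    (hb : ∀ k η, ‖f k η‖ ≤ b k) (hs : Summable b) (hF : ∀ η, HasSum (fun k => f k η) (F η)) :
    HasSum (fun k => ∫ η, f k η ∂om m) (∫ η, F η ∂om m) := by
  have := om_prob hm
  refine hasSum_integral_of_dominated_convergence (fun k _ => b k)
    (fun k => (sph_integrable hm _ (hf k)).aestronglyMeasurable)
    (fun k => Filter.Eventually.of_forall (hb k)) (Filter.Eventually.of_forall fun _ => hs)
    (integrable_const _) (Filter.Eventually.of_forall hF)

theorem double_swap (hm : 2 ≤ m) {V W U : Type*} [NormedAddCommGroup V] [NormedSpace ℝ V]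
    [CompleteSpace V] [NormedAddCommGroup W] [NormedSpace ℝ W] [CompleteSpace W]
    [NormedAddCommGroup U] [NormedSpace ℝ U] [CompleteSpace U]
    (B : V →L[ℝ] W →L[ℝ] U)
    (P : ℕ → SS m → V) (PP : SS m → V) (p : ℕ → ℝ) (hP : ∀ k, Continuous (P k))
    (hp : ∀ k η, ‖P k η‖ ≤ p k) (hps : Summable p) (hPP : ∀ η, HasSum (fun k => P k η) (PP η))
    (Q : ℕ → SS m → W) (QQ : SS m → W) (q : ℕ → ℝ) (hQ : ∀ k, Continuous (Q k))
    (hq : ∀ k η, ‖Q k η‖ ≤ q k) (hqs : Summable q) (hQQ : ∀ η, HasSum (fun k => Q k η) (QQ η))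
    (I : ℕ → U) (hI : ∀ k l, ∫ η, B (P k η) (Q l η) ∂om m = if k = l then I k else 0) :
    HasSum I (∫ η, B (PP η) (QQ η) ∂om m) := by
  have hQc : Continuous QQ := by
    have : QQ = fun η => ∑' k, Q k η := funext fun η => (hQQ η).tsum_eq.symm
    rw [this]
    exact continuous_tsum hQ hqs hq
  have hqb : ∀ η, ‖QQ η‖ ≤ ∑' k, q k := fun η => by
    rw [← (hQQ η).tsum_eq]
    exact tsum_of_norm_bounded hqs.hasSum (fun k => hq k η)
  have hk : ∀ k, ∫ η, B (P k η) (QQ η) ∂om m = I k := by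
    intro k
    have h := swap_sum hm (fun l η => B (P k η) (Q l η)) (fun η => B (P k η) (QQ η))
      (fun l => ‖B‖ * p k * q l) (fun l => ((B.continuous.comp (hP k)).clm_apply (hQ l)))
      (fun l η => (B.le_opNorm₂ _ _).trans (by
        have := hp k η
        have := hq l η
        have := (norm_nonneg _).trans (hp k η)
        gcongr)) (hqs.mul_left _)
      (fun η => (hQQ η).mapL _)
    simp only [hI] at h
    exact h.unique (by simpa only [eq_comm] using hasSum_ite_eq k (I k))
  have h := swap_sum hm (fun k η => B (P k η) (QQ η)) (fun η => B (PP η) (QQ η))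
      (fun k => ‖B‖ * p k * (∑' l, q l)) (fun k => ((B.continuous.comp (hP k)).clm_apply hQc))
      (fun k η => (B.le_opNorm₂ _ _).trans (by
        have := hp k η
        have := hqb η
        have := (norm_nonneg _).trans (hp k η)
        gcongr)) ((hps.mul_left _).mul_right _)
      (fun η => (hPP η).mapL (B.flip (QQ η)))
  simpa only [hk] using h

theorem gegT_rec {lam : ℝ} (hl : 0 ≤ lam) (w : ℝ) (k : ℕ) :
    w * gegT lam k w = ((k+1:ℕ):ℝ)/(2*((k+1:ℕ)+lam)) * gegT lam (k+1) w +
      if 1 ≤ k then (1 - ((k-1:ℕ):ℝ)/(2*((k-1:ℕ)+lam))) * gegT lam (k-1) w else 0 := by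
  rcases k with _ | k
  · have h := G5 hl w 1
    have h0 : Dg lam 1 w = 1 := by rw [Dg_succ_eq]; simp [gegT_zero, Dg]
    have h00 : Dg lam 0 w = 0 := by simp [Dg]
    rw [h0] at h
    simp only [Nat.sub_self, h00] at h
    simp [gegT_zero] at h ⊢
    linarith
  · have h1 := G5 hl w (k+2)
    have h2 := G5 hl w k
    have e1 := Dg_succ_eq lam w (k+1)
    have e2 := Dg_succ_eq lam w k
    simp only [Nat.add_sub_cancel] at e1
    have s : k + 2 - 1 = k + 1 := rfl
    rw [s] at h1
    simp only [show 1 ≤ k+1 by omega, if_true, Nat.add_sub_cancel]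
    have e1' : Dg lam (k+2) w = gegT lam (k+1) w + Dg lam k w := e1
    show w * gegT lam (k+1) w = ((k+2:ℕ):ℝ)/(2*((k+2:ℕ)+lam)) * gegT lam (k+2) w + _
    linear_combination h1 - h2 - w * e1' + e2

/-- coefficients of the plane wave expansion -/
def pw (lam : ℝ) (k j : ℕ) : ℝ := 1 / (2^(k+2*j) * j.factorial * Real.Gamma (k+j+lam+1))

theorem pw_rec {lam : ℝ} (hl : 0 ≤ lam) (k j : ℕ) :
    ((k+2*j+2:ℕ):ℝ) * pw lam k (j+1) = (if 1 ≤ k then pw lam (k-1) (j+1) * ((k:ℝ)/(2*(k+lam))) else 0)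
      + pw lam (k+1) j * (1 - (k:ℝ)/(2*(k+lam))) := by
  have hg0 : 0 < Real.Gamma (k+j+lam+1) := Real.Gamma_pos_of_pos (by positivity)
  have hg : Real.Gamma (k+j+lam+1+1) = (k+j+lam+1) * Real.Gamma (k+j+lam+1) :=
    Real.Gamma_add_one (by positivity)
  have q : 2 * ((k:ℝ)/(2*(k+lam))) * (k+lam) = k := by
    by_cases h : (k:ℝ)+lam = 0
    · have : (k:ℝ) = 0 := by have : (0:ℝ) ≤ k := by positivity
                             linarith
      simp [this]
    · field_simp
  have e1 : (if 1 ≤ k then pw lam (k-1) (j+1) * ((k:ℝ)/(2*(k+lam))) else 0) =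
      1 / (2^(k+2*j+1) * (j+1).factorial * Real.Gamma (k+j+lam+1)) * ((k:ℝ)/(2*(k+lam))) := by
    rcases k with _ | k
    · simp
    · simp only [show 1 ≤ k+1 by omega, if_true, Nat.add_sub_cancel, pw]
      rw [show k + 2*(j+1) = k+1+2*j+1 by ring,
        show ((k:ℝ)+((j+1:ℕ):ℝ)+lam+1) = ((k+1:ℕ):ℝ)+j+lam+1 by push_cast; ring]
  have e2 : pw lam k (j+1) = 1 / (2^(k+2*j+2) * (j+1).factorial * Real.Gamma (k+j+lam+1+1)) := by
    simp only [pw]; congr 3; push_cast; ring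
  have e3 : pw lam (k+1) j = 1 / (2^(k+2*j+1) * j.factorial * Real.Gamma (k+j+lam+1+1)) := by
    simp only [pw]; congr 2
    · congr 2; ring
    · congr 1; push_cast; ring
  rw [e1, e2, e3, hg]
  generalize (k:ℝ)/(2*(k+lam)) = q at *
  have : (0:ℝ) < k+j+lam+1 := by positivity
  rw [Nat.factorial_succ, pow_succ _ (k+2*j+1)]
  have hf : (j.factorial : ℝ) ≠ 0 := by positivity
  generalize Real.Gamma (k+j+lam+1) = G at *
  push_cast
  field_simp
  linear_combination -q

theorem pow_expand {lam : ℝ} (hl : 0 ≤ lam) (w : ℝ) (n : ℕ) :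
    ∑ j ∈ Finset.range (n+1), (if 2*j ≤ n then pw lam (n-2*j) j * gegT lam (n-2*j) w else 0)
      = w^n / (n.factorial * Real.Gamma (lam+1)) := by
  induction n with
  | zero => simp [pw, gegT_zero]
  | succ n ih =>
    let F : ℕ → ℕ → ℝ := fun n j => if 2*j ≤ n then pw lam (n-2*j) j * gegT lam (n-2*j) w else 0
    let U : ℕ → ℝ := fun j => if 2*j ≤ n then pw lam (n-2*j) j *
      ((((n-2*j)+1:ℕ):ℝ)/(2*(((n-2*j)+1:ℕ)+lam)) * gegT lam (n-2*j+1) w) else 0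
    let V : ℕ → ℝ := fun j => if 2*j ≤ n then pw lam (n-2*j) j *
      (if 1 ≤ n-2*j then (1 - ((n-2*j-1:ℕ):ℝ)/(2*((n-2*j-1:ℕ)+lam))) * gegT lam (n-2*j-1) w else 0) else 0
    have hUV : ∀ j, w * F n j = U j + V j := by
      intro j
      simp only [F, U, V]
      split_ifs with h1 h2
      · have := gegT_rec hl w (n-2*j)
        rw [if_pos h2] at this
        linear_combination pw lam (n-2*j) j * this
      · have := gegT_rec hl w (n-2*j)
        rw [if_neg h2] at this
        linear_combination pw lam (n-2*j) j * this
      · simp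
    have hF0 : ((n:ℝ)+1) * F (n+1) 0 = U 0 := by
      simp only [F, U]
      simp only [mul_zero, Nat.zero_le, if_true, Nat.sub_zero, pw, Nat.factorial_zero]
      push_cast
      have hg : Real.Gamma ((n:ℝ)+1+0+lam+1) = (n+0+lam+1) * Real.Gamma (n+0+lam+1) := by
        rw [← Real.Gamma_add_one (by positivity)]; congr 1; ring
      have hg0 : 0 < Real.Gamma ((n:ℝ)+0+lam+1) := Real.Gamma_pos_of_pos (by positivity)
      rw [hg]
      have : (0:ℝ) < n+0+lam+1 := by positivity
      have : (0:ℝ) < n+1+lam := by positivity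
      field_simp
      ring
    have hFs : ∀ j, ((n:ℝ)+1) * F (n+1) (j+1) = U (j+1) + V j := by
      intro j
      simp only [F, U, V]
      by_cases h : 2*j+1 ≤ n
      · obtain ⟨k, rfl⟩ : ∃ k, n = k + 2*j + 1 := ⟨n - (2*j+1), by omega⟩
        have r := pw_rec hl k j
        rw [if_pos (by omega), if_pos (show 2*j ≤ k+2*j+1 by omega),
          if_pos (show 1 ≤ k+2*j+1-2*j by omega),
          show k+2*j+1+1-2*(j+1) = k by omega, show k+2*j+1-2*j = k+1 by omega, Nat.add_sub_cancel]
        rcases Nat.eq_zero_or_pos k with rfl | hk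
        · rw [if_neg (by omega)]
          rw [if_neg (by omega)] at r
          push_cast at r ⊢
          linear_combination gegT lam 0 w * r
        · rw [if_pos (by omega)]
          rw [if_pos (by omega)] at r
          rw [show k+2*j+1-2*(j+1) = k-1 by omega, Nat.sub_add_cancel hk]
          push_cast at r ⊢
          linear_combination gegT lam k w * r
      · rw [if_neg (by omega), if_neg (by omega)]
        split_ifs <;> simp
        omega
    have hUe : U (n+1) = 0 := by simp only [U]; rw [if_neg (by omega)]
    have key : ((n:ℝ)+1) * ∑ j ∈ Finset.range (n+2), F (n+1) j = w * ∑ j ∈ Finset.range (n+1), F n j := by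
      rw [Finset.mul_sum, Finset.sum_range_succ', hF0, Finset.mul_sum]
      simp only [hFs, hUV, Finset.sum_add_distrib]
      have := Finset.sum_range_succ' U (n+1)
      rw [Finset.sum_range_succ, hUe] at this
      linarith
    have ih' : ∑ j ∈ Finset.range (n+1), F n j = w^n / (n.factorial * Real.Gamma (lam+1)) := ih
    rw [ih'] at key
    show ∑ j ∈ Finset.range (n+2), F (n+1) j = _
    have hg0 : 0 < Real.Gamma (lam+1) := Real.Gamma_pos_of_pos (by positivity)
    rw [Nat.factorial_succ]
    push_cast
    have hn : (0:ℝ) < n+1 := by positivity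
    rw [eq_div_iff (by positivity), pow_succ]
    have hf : (n.factorial : ℝ) ≠ 0 := by positivity
    field_simp at key
    linear_combination key

theorem Gamma_lower {lam : ℝ} (hl : 0 ≤ lam) (n : ℕ) :
    n.factorial * Real.Gamma (lam+1) ≤ Real.Gamma (n+lam+1) := by
  induction n with
  | zero => simp
  | succ n ih =>
    have hg0 : 0 < Real.Gamma (n+lam+1) := Real.Gamma_pos_of_pos (by positivity)
    have hg : Real.Gamma (((n+1:ℕ):ℝ)+lam+1) = (n+lam+1) * Real.Gamma (n+lam+1) := by
      rw [← Real.Gamma_add_one (by positivity)]; congr 1; push_cast; ring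
    rw [hg, Nat.factorial_succ]
    push_cast
    have : ((n:ℝ)+1) * (n.factorial * Real.Gamma (lam+1)) ≤ (n+1) * Real.Gamma (n+lam+1) := by gcongr
    nlinarith

theorem Gamma_lower2 {lam : ℝ} (hl : 0 ≤ lam) (k j : ℕ) :
    k.factorial * Real.Gamma (lam+1) ≤ Real.Gamma (k+j+lam+1) := by
  have h := Gamma_lower hl (k+j)
  push_cast at h
  refine le_trans ?_ h
  have hg0 : 0 < Real.Gamma (lam+1) := Real.Gamma_pos_of_pos (by positivity)
  gcongr
  omega

theorem pw_nonneg {lam : ℝ} (hl : 0 ≤ lam) (k j : ℕ) : 0 ≤ pw lam k j := by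
  have hg0 : 0 < Real.Gamma (k+j+lam+1) := Real.Gamma_pos_of_pos (by positivity)
  unfold pw; positivity

theorem pw_le {lam : ℝ} (hl : 0 ≤ lam) (k j : ℕ) :
    pw lam k j ≤ 1 / (k.factorial * j.factorial * Real.Gamma (lam+1)) := by
  have hg0 : 0 < Real.Gamma (lam+1) := Real.Gamma_pos_of_pos (by positivity)
  unfold pw
  have h := Gamma_lower2 hl k j
  have h1 : (1:ℝ) ≤ 2^(k+2*j) := one_le_pow₀ (by norm_num)
  refine one_div_le_one_div_of_le (by positivity) ?_
  calc (k.factorial * j.factorial * Real.Gamma (lam+1) : ℝ) = 1 * j.factorial * (k.factorial * Real.Gamma (lam+1)) := by ring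
    _ ≤ _ := by gcongr

/-- `z^{-λ} J_{k+λ}(z)` -/
def Jk (lam : ℝ) (k : ℕ) (z : ℝ) : ℝ := z^k * besselJt (k+lam) z

theorem pw_summable {lam : ℝ} (hl : 0 ≤ lam) (k : ℕ) (z : ℝ) :
    Summable fun j => ‖pw lam k j * (-1)^j * z^(2*j)‖ := by
  have h := (Real.summable_pow_div_factorial (z^2)).mul_left (1 / (k.factorial * Real.Gamma (lam+1)))
  have hg0 : 0 < Real.Gamma (lam+1) := Real.Gamma_pos_of_pos (by positivity)
  refine Summable.of_nonneg_of_le (fun _ => norm_nonneg _) (fun j => ?_) h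
  rw [norm_mul, norm_mul, norm_pow, norm_neg, norm_one, one_pow, mul_one, Real.norm_eq_abs,
    abs_of_nonneg (pw_nonneg hl k j), pow_mul, Real.norm_eq_abs, abs_of_nonneg (by positivity)]
  calc _ ≤ 1 / (k.factorial * j.factorial * Real.Gamma (lam+1)) * (z^2)^j := by
        gcongr; exact pw_le hl k j
    _ = _ := by field_simp

theorem bessel_pw {lam : ℝ} (hl : 0 ≤ lam) (k : ℕ) (z : ℝ) :
    HasSum (fun j => pw lam k j * (-1)^j * z^(2*j)) (2^lam * besselJt (k+lam) z) := by
  have h := (pw_summable hl k z).of_norm.hasSum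
  suffices e : 2^lam * besselJt (k+lam) z = ∑' j, pw lam k j * (-1)^j * z^(2*j) by
    rw [e]; exact h
  unfold besselJt
  rw [← tsum_mul_left]
  congr 1; funext j
  have hg0 : 0 < Real.Gamma (k+j+lam+1) := Real.Gamma_pos_of_pos (by positivity)
  rw [pw, show (j:ℝ)+(k+lam)+1 = k+j+lam+1 by ring, Real.rpow_add (by norm_num), Real.rpow_natCast,
    div_pow, pow_add]
  have : (0:ℝ) < 2^lam := by positivity
  field_simp

theorem Jk_bound {lam : ℝ} (hl : 0 ≤ lam) (k : ℕ) (z : ℝ) :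
    |2^lam * Jk lam k z| ≤ |z|^k / k.factorial * (Real.exp (z^2) / Real.Gamma (lam+1)) := by
  have hg0 : 0 < Real.Gamma (lam+1) := Real.Gamma_pos_of_pos (by positivity)
  have hs : HasSum (fun j => 1 / (k.factorial * Real.Gamma (lam+1)) * ((z^2)^j / j.factorial))
      (1 / (k.factorial * Real.Gamma (lam+1)) * Real.exp (z^2)) := by
    rw [Real.exp_eq_exp_ℝ]
    exact (NormedSpace.expSeries_div_hasSum_exp (z^2)).mul_left _
  have h : ‖2^lam * besselJt (k+lam) z‖ ≤ 1 / (k.factorial * Real.Gamma (lam+1)) * Real.exp (z^2) := by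
    rw [← (bessel_pw hl k z).tsum_eq]
    refine tsum_of_norm_bounded hs (fun j => ?_)
    rw [norm_mul, norm_mul, norm_pow, norm_neg, norm_one, one_pow, mul_one, Real.norm_eq_abs,
      abs_of_nonneg (pw_nonneg hl k j), pow_mul, Real.norm_eq_abs, abs_of_nonneg (by positivity)]
    calc _ ≤ 1 / (k.factorial * j.factorial * Real.Gamma (lam+1)) * (z^2)^j := by
          gcongr; exact pw_le hl k j
      _ = _ := by field_simp
  calc |2^lam * Jk lam k z| = |z|^k * ‖2^lam * besselJt (k+lam) z‖ := by
        rw [Jk, Real.norm_eq_abs, ← abs_pow, ← abs_mul]; congr 1; ring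
    _ ≤ |z|^k * (1 / (k.factorial * Real.Gamma (lam+1)) * Real.exp (z^2)) := by gcongr
    _ = _ := by field_simp

theorem plane_wave {lam : ℝ} (hl : 0 ≤ lam) (z s : ℝ) (hs : |s| ≤ 1) :
    HasSum (fun k => Complex.I^k * ((2^lam * Real.Gamma (lam+1) * Jk lam k z * gegT lam k s : ℝ) : ℂ))
      (Complex.exp (Complex.I * (z*s : ℝ))) := by
  have hg0 : 0 < Real.Gamma (lam+1) := Real.Gamma_pos_of_pos (by positivity)
  let G : ℕ × ℕ → ℂ := fun p => (Complex.I * z)^(p.1+2*p.2) *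
    ((Real.Gamma (lam+1) * (pw lam p.1 p.2 * gegT lam p.1 s) : ℝ) : ℂ)
  let H : ℕ × ℕ → ℂ := fun p => if 2*p.2 ≤ p.1 then G (p.1-2*p.2, p.2) else 0
  let φ : ℕ × ℕ → ℕ × ℕ := fun p => (p.1+2*p.2, p.2)
  have hφ : Function.Injective φ := by
    rintro ⟨a, b⟩ ⟨c, d⟩ h
    simp only [φ, Prod.mk.injEq] at h ⊢
    omega
  have hH0 : ∀ p, p ∉ Set.range φ → H p = 0 := by
    rintro ⟨n, j⟩ h
    simp only [H]
    rw [if_neg]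
    intro h'
    exact h ⟨(n-2*j, j), by
      have h2 : 2*j ≤ n := h'
      simp only [φ, Prod.mk.injEq, and_true]; omega⟩
  have hHφ : H ∘ φ = G := by
    funext ⟨k, j⟩
    simp only [H, φ, Function.comp]
    rw [if_pos (by omega)]
    congr 2; omega
  have hG : Summable G := by
    set b : ℝ := 4*(2+lam)
    have hb : 0 < b := by positivity
    have h1 := Real.summable_pow_div_factorial (|z| * b)
    have h2 := Real.summable_pow_div_factorial (z^2)
    have h := ((h1.mul_of_nonneg h2 (fun _ => by positivity) (fun _ => by positivity))).mul_left (2*b)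
    refine Summable.of_norm_bounded h ?_
    rintro ⟨k, j⟩
    simp only [G]
    rw [norm_mul, norm_pow, norm_mul, Complex.norm_I, one_mul, Complex.norm_real, Complex.norm_real,
      Real.norm_eq_abs, Real.norm_eq_abs, abs_mul, abs_mul, abs_of_pos hg0, abs_of_nonneg (pw_nonneg hl k j)]
    have hz := gegT_bound hl hs k
    calc |z|^(k+2*j) * (Real.Gamma (lam+1) * (pw lam k j * |gegT lam k s|))
        ≤ |z|^(k+2*j) * (Real.Gamma (lam+1) * (1 / (k.factorial * j.factorial * Real.Gamma (lam+1)) * (2*b^(k+1)))) := by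
          gcongr
          · exact pw_le hl k j
      _ = _ := by
          rw [pow_add, pow_mul, sq_abs, mul_pow |z|, pow_succ b]; field_simp
  have hGs := hG.hasSum
  have hHs : HasSum H (∑' p, G p) := by
    rw [← hφ.hasSum_iff hH0, hHφ]; exact hGs
  have e1 : HasSum (fun n : ℕ => (Complex.I * (z*s:ℝ))^n / n.factorial) (∑' p, G p) := by
    refine hHs.prod_fiberwise (fun n => ?_)
    have : HasSum (fun j => H (n, j)) (∑ j ∈ Finset.range (n+1), H (n,j)) := by
      refine hasSum_sum_of_ne_finset_zero (fun j hj => ?_)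
      simp only [H]
      rw [if_neg]
      simp at hj; omega
    convert this using 1
    have e : ∀ j ∈ Finset.range (n+1), H (n,j) = (Complex.I*z)^n * ((Real.Gamma (lam+1) *
        (if 2*j ≤ n then pw lam (n-2*j) j * gegT lam (n-2*j) s else 0) : ℝ):ℂ) := by
      intro j _
      simp only [H, G]
      split_ifs with h
      · rw [Nat.sub_add_cancel h]
      · simp
    rw [Finset.sum_congr rfl e, ← Finset.mul_sum, ← Complex.ofReal_sum, ← Finset.mul_sum, pow_expand hl]
    have hf : (n.factorial : ℂ) ≠ 0 := by exact_mod_cast n.factorial_ne_zero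
    have : Real.Gamma (lam+1) * (s^n / (n.factorial * Real.Gamma (lam+1))) = s^n / n.factorial := by
      field_simp
    rw [this]
    push_cast
    rw [← mul_assoc, mul_pow]; ring
  have e2 : ∑' p, G p = Complex.exp (Complex.I * (z*s : ℝ)) := by
    refine e1.unique ?_
    rw [Complex.exp_eq_exp_ℂ]
    exact NormedSpace.expSeries_div_hasSum_exp _
  rw [← e2]
  refine hGs.prod_fiberwise (fun k => ?_)
  have h := ((bessel_pw hl k z).mapL Complex.ofRealCLM).mul_left
    (Complex.I^k * ((Real.Gamma (lam+1) * z^k * gegT lam k s : ℝ):ℂ))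
  have a1 : (fun j => G (k, j)) = fun i =>
      Complex.I ^ k * ((Real.Gamma (lam + 1) * z ^ k * gegT lam k s : ℝ) : ℂ) *
        Complex.ofRealCLM (pw lam k i * (-1) ^ i * z ^ (2 * i)) := by
    funext j
    simp only [G, Complex.ofRealCLM_apply]
    rw [mul_pow, pow_add Complex.I, pow_mul Complex.I, Complex.I_sq]
    push_cast
    ring
  have a2 : Complex.I ^ k * ((2 ^ lam * Real.Gamma (lam + 1) * Jk lam k z * gegT lam k s : ℝ) : ℂ) =
    Complex.I ^ k * ((Real.Gamma (lam + 1) * z ^ k * gegT lam k s : ℝ) : ℂ) *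
      Complex.ofRealCLM (2 ^ lam * besselJt (k + lam) z) := by
    simp only [Complex.ofRealCLM_apply, Jk]
    push_cast
    ring
  rw [a1, a2]
  exact h

/-- summable majorant -/
def maj (lam : ℝ) (C : ℝ) (k : ℕ) (z : ℝ) : ℝ := C * ((|z| * (4*(2+lam)))^k / k.factorial)

theorem maj_summable (lam C z : ℝ) : Summable fun k => maj lam C k z :=
  (Real.summable_pow_div_factorial _).mul_left _

theorem maj_bound {lam : ℝ} (hl : 0 ≤ lam) (z : ℝ) (k : ℕ) (q D : ℝ) (hD : 0 ≤ D)
    (hq : |q| ≤ D * (4*(2+lam))^k) :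
    |2^lam * Real.Gamma (lam+1) * Jk lam k z * q| ≤ maj lam (Real.exp (z^2) * D) k z := by
  have hg0 : 0 < Real.Gamma (lam+1) := Real.Gamma_pos_of_pos (by positivity)
  have hJ := Jk_bound hl k z
  calc |2^lam * Real.Gamma (lam+1) * Jk lam k z * q|
      = Real.Gamma (lam+1) * |2^lam * Jk lam k z| * |q| := by
        rw [← abs_of_pos hg0, ← abs_mul, ← abs_mul, abs_of_pos hg0]; congr 1; ring
    _ ≤ Real.Gamma (lam+1) * (|z|^k / k.factorial * (Real.exp (z^2) / Real.Gamma (lam+1))) *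
        (D * (4*(2+lam))^k) := by gcongr
    _ = _ := by
        rw [maj, mul_pow |z|]
        generalize (4*(2+lam))^k = b
        field_simp

theorem inner_abs_le (x : EE m) (hx : ‖x‖ = 1) (η : SS m) : |inner ℝ x (η : EE m)| ≤ 1 := by
  have := abs_real_inner_le_norm x (η : EE m)
  rwa [hx, mem_sphere_zero_iff_norm.1 η.2, one_mul] at this

/-- terms of the plane wave series on the sphere -/
def pwt (lam : ℝ) (c : ℂ) (z : ℝ) (x : EE m) (k : ℕ) (η : SS m) : ℂ :=
  c^k * ((2^lam * Real.Gamma (lam+1) * Jk lam k z * gegT lam k (inner ℝ x (η : EE m)) : ℝ) : ℂ)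

theorem pwt_cont (lam : ℝ) (c : ℂ) (z : ℝ) (x : EE m) (k : ℕ) : Continuous (pwt lam c z x k) := by
  unfold pwt
  have := cont_comp_inner (continuous_gegT lam k) x
  fun_prop

theorem pwt_bound {lam : ℝ} (hl : 0 ≤ lam) (c : ℂ) (hc : ‖c‖ = 1) (z : ℝ) (x : EE m) (hx : ‖x‖ = 1)
    (k : ℕ) (η : SS m) : ‖pwt lam c z x k η‖ ≤ maj lam (Real.exp (z^2) * (2*(4*(2+lam)))) k z := by
  unfold pwt
  rw [norm_mul, norm_pow, hc, one_pow, one_mul, Complex.norm_real, Real.norm_eq_abs]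
  refine maj_bound hl z k _ _ (by positivity) ((gegT_bound hl (inner_abs_le x hx η) k).trans (le_of_eq ?_))
  rw [pow_succ]; ring

theorem pwt_hasSum {lam : ℝ} (hl : 0 ≤ lam) (z : ℝ) (x : EE m) (hx : ‖x‖ = 1) (η : SS m) :
    HasSum (fun k => pwt lam Complex.I z x k η) (Complex.exp (Complex.I * (z * inner ℝ x (η : EE m) : ℝ))) :=
  plane_wave hl z _ (inner_abs_le x hx η)

theorem pwt_hasSum_neg {lam : ℝ} (hl : 0 ≤ lam) (z : ℝ) (x : EE m) (hx : ‖x‖ = 1) (η : SS m) :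
    HasSum (fun k => pwt lam (-Complex.I) z x k η)
      (Complex.exp (-(Complex.I * (z * inner ℝ x (η : EE m) : ℝ)))) := by
  have h := (pwt_hasSum hl z x hx η).mapL (Complex.conjCLE : ℂ →L[ℝ] ℂ)
  have a1 : (fun k => pwt lam (-Complex.I) z x k η) =
      fun k => (Complex.conjCLE : ℂ →L[ℝ] ℂ) (pwt lam Complex.I z x k η) := by
    funext k; simp [pwt]
  have a2 : Complex.exp (-(Complex.I * (z * inner ℝ x (η : EE m) : ℝ))) =
      (Complex.conjCLE : ℂ →L[ℝ] ℂ) (Complex.exp (Complex.I * (z * inner ℝ x (η : EE m) : ℝ))) := by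
    simp [← Complex.exp_conj]
  rw [a1, a2]
  exact h

theorem pwt_int (hm : 2 ≤ m) {lam : ℝ} (hl : 0 ≤ lam) (hlm : 2*lam+1 = (m:ℝ)-1) (z : ℝ) (x : EE m)
    (hx : ‖x‖ = 1) :
    ∫ η : SS m, Complex.exp (Complex.I * (z * inner ℝ x (η : EE m) : ℝ)) ∂om m =
      ((2^lam * Real.Gamma (lam+1) * besselJt lam z : ℝ) : ℂ) := by
  have h := swap_sum hm (fun k η => pwt lam Complex.I z x k η) _ _ (fun k => pwt_cont lam _ z x k)
    (pwt_bound hl _ Complex.norm_I z x hx) (maj_summable lam _ z) (pwt_hasSum hl z x hx)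
  have e : ∀ k, ∫ η, pwt lam Complex.I z x k η ∂om m =
      if k = 0 then ((2^lam * Real.Gamma (lam+1) * besselJt lam z : ℝ) : ℂ) else 0 := by
    intro k
    have n := N_eq hm hl hlm k 0 x x hx hx
    simp only [gegT_zero, mul_one] at n
    unfold pwt
    rw [integral_const_mul, integral_complex_ofReal, integral_const_mul, n]
    split_ifs with hk
    · subst hk; simp [gegT_zero, Jk]
    · simp
  simp only [e] at h
  exact h.unique (hasSum_ite_eq 0 _)

theorem addition (hm : 2 ≤ m) {lam : ℝ} (hl : 0 ≤ lam) (hlm : 2*lam+1 = (m:ℝ)-1) (a b : ℝ) (x y : EE m)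
    (hx : ‖x‖ = 1) (hy : ‖y‖ = 1) :
    HasSum (fun k => (((2^lam * Real.Gamma (lam+1))^2 * (Jk lam k a * Jk lam k b) *
      gegT lam k (inner ℝ x y) : ℝ) : ℂ))
      ((2^lam * Real.Gamma (lam+1) * besselJt lam ‖a • x - b • y‖ : ℝ) : ℂ) := by
  obtain ⟨v, hv, hv'⟩ : ∃ v : EE m, ‖v‖ = 1 ∧ ‖a • x - b • y‖ • v = a • x - b • y := by
    by_cases h : a • x - b • y = 0
    · exact ⟨x, hx, by rw [h]; simp⟩
    · have h0 : ‖a • x - b • y‖ ≠ 0 := norm_ne_zero_iff.2 h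
      refine ⟨‖a • x - b • y‖⁻¹ • (a • x - b • y), ?_, ?_⟩
      · rw [norm_smul, norm_inv, norm_norm, inv_mul_cancel₀ h0]
      · rw [smul_smul, mul_inv_cancel₀ h0, one_smul]
  rw [← pwt_int hm hl hlm _ v hv]
  have h := double_swap hm (ContinuousLinearMap.mul ℝ ℂ) (pwt lam Complex.I a x) _ _
    (fun k => pwt_cont lam _ a x k)
    (pwt_bound hl _ Complex.norm_I a x hx) (maj_summable lam _ a) (pwt_hasSum hl a x hx)
    (pwt lam (-Complex.I) b y) _ _
    (fun k => pwt_cont lam _ b y k)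
    (pwt_bound hl _ (by rw [norm_neg, Complex.norm_I]) b y hy) (maj_summable lam _ b) (pwt_hasSum_neg hl b y hy)
    (fun k => (((2^lam * Real.Gamma (lam+1))^2 * (Jk lam k a * Jk lam k b) *
      gegT lam k (inner ℝ x y) : ℝ) : ℂ)) ?_
  · have e : ∀ η : SS m, Complex.exp (Complex.I * (‖a • x - b • y‖ * inner ℝ v (η : EE m) : ℝ)) =
        ContinuousLinearMap.mul ℝ ℂ (Complex.exp (Complex.I * (a * inner ℝ x (η : EE m) : ℝ)))
          (Complex.exp (-(Complex.I * (b * inner ℝ y (η : EE m) : ℝ)))) := ?_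
    · simp only [e]; exact h
    intro η
    rw [ContinuousLinearMap.mul_apply', ← Complex.exp_add]
    congr 1
    rw [← real_inner_smul_left v (η : EE m), hv', inner_sub_left, real_inner_smul_left, real_inner_smul_left]
    push_cast; ring
  · intro k l
    have n := N_eq hm hl hlm k l x y hx hy
    have : ∀ η : SS m, ContinuousLinearMap.mul ℝ ℂ (pwt lam Complex.I a x k η) (pwt lam (-Complex.I) b y l η)
      = (Complex.I^k * (-Complex.I)^l * ((2^lam * Real.Gamma (lam+1))^2 * (Jk lam k a * Jk lam l b) : ℝ)) *
        ((gegT lam k (inner ℝ x (η : EE m)) * gegT lam l (inner ℝ y (η : EE m)) : ℝ) : ℂ) := by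
      intro η
      rw [ContinuousLinearMap.mul_apply', pwt, pwt]
      push_cast; ring
    simp only [this]
    rw [integral_const_mul, integral_complex_ofReal, n]
    split_ifs with hk
    · subst hk
      rw [← mul_pow, mul_neg, Complex.I_mul_I, neg_neg, one_pow]
      push_cast; ring
    · simp


/-! ### Ring structure on the Clifford algebra -/

/-- elementary sign -/
def chi (t u : Fin m) : ℂ := if u ≤ t then -1 else 1

/-- sign of a product of basis elements -/
def sg (T U : Finset (Fin m)) : ℂ := ∏ t ∈ T, ∏ u ∈ U, chi t u

theorem chi_sq (t u : Fin m) : chi t u * chi t u = 1 := by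
  unfold chi; split_ifs <;> simp

theorem prod_symmDiff {ι : Type*} [DecidableEq ι] (f : ι → ℂ) (hf : ∀ i, f i * f i = 1) (S T : Finset ι) :
    ∏ i ∈ symmDiff S T, f i = (∏ i ∈ S, f i) * ∏ i ∈ T, f i := by
  have h1 : ∏ i ∈ S, f i = (∏ i ∈ S \ T, f i) * ∏ i ∈ S ∩ T, f i := by
    rw [mul_comm, Finset.prod_inter_mul_prod_sdiff]
  have h2 : ∏ i ∈ T, f i = (∏ i ∈ T \ S, f i) * ∏ i ∈ S ∩ T, f i := by
    rw [mul_comm, Finset.inter_comm, Finset.prod_inter_mul_prod_sdiff]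
  have h3 : (∏ i ∈ S ∩ T, f i) * (∏ i ∈ S ∩ T, f i) = 1 := by
    rw [← Finset.prod_mul_distrib]; exact Finset.prod_eq_one fun i _ => hf i
  have h4 : symmDiff S T = (S \ T) ∪ (T \ S) := rfl
  rw [h4, Finset.prod_union disjoint_sdiff_sdiff, h1, h2]
  linear_combination (-(∏ i ∈ S \ T, f i) * ∏ i ∈ T \ S, f i) * h3

theorem sg_right_sq (t : Fin m) (U : Finset (Fin m)) : (∏ u ∈ U, chi t u) * (∏ u ∈ U, chi t u) = 1 := by
  rw [← Finset.prod_mul_distrib]; exact Finset.prod_eq_one fun i _ => chi_sq _ _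

theorem sg_sq (T U : Finset (Fin m)) : sg T U * sg T U = 1 := by
  unfold sg
  rw [← Finset.prod_mul_distrib]; exact Finset.prod_eq_one fun i _ => sg_right_sq _ _

theorem sg_left (S T U : Finset (Fin m)) : sg (symmDiff S T) U = sg S U * sg T U :=
  prod_symmDiff _ (fun t => sg_right_sq t U) S T

theorem sg_right (S T U : Finset (Fin m)) : sg S (symmDiff T U) = sg S T * sg S U := by
  unfold sg
  rw [← Finset.prod_mul_distrib]
  exact Finset.prod_congr rfl fun t _ => prod_symmDiff _ (chi_sq t) T U

theorem sg_eq (T U : Finset (Fin m)) :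
    (-1 : ℂ) ^ ((((T ×ˢ U).filter fun p : Fin m × Fin m => p.2 < p.1).card) + (T ∩ U).card) = sg T U := by
  have h : sg T U = ∏ p ∈ T ×ˢ U, chi p.1 p.2 := (Finset.prod_product' T U chi).symm
  have h1 : ∀ p : Fin m × Fin m, chi p.1 p.2 =
      (if p.2 < p.1 then (-1:ℂ) else 1) * (if p.1 = p.2 then (-1:ℂ) else 1) := by
    intro p
    unfold chi
    rcases lt_trichotomy p.2 p.1 with h | h | h
    · simp [h, h.le, h.ne']
    · simp [h]
    · simp [h.not_ge, h.not_gt, h.ne]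
  rw [h, Finset.prod_congr rfl (fun p _ => h1 p), Finset.prod_mul_distrib, pow_add]
  congr 1
  · rw [← Finset.prod_filter, Finset.prod_const]
  · rw [← Finset.prod_filter, Finset.prod_const]
    congr 1
    symm
    refine Finset.card_bij' (fun p _ => p.1) (fun t _ => (t, t)) ?_ ?_ ?_ ?_
    · rintro ⟨a, b⟩ h
      simp only [Finset.mem_filter, Finset.mem_product, Finset.mem_inter] at h ⊢
      obtain ⟨⟨h1, h2⟩, rfl⟩ := h
      exact ⟨h1, h2⟩
    · intro t h
      simp only [Finset.mem_filter, Finset.mem_product, Finset.mem_inter] at h ⊢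
      exact ⟨h, trivial⟩
    · rintro ⟨a, b⟩ h
      simp only [Finset.mem_filter] at h
      obtain ⟨_, rfl⟩ := h
      rfl
    · intro t h; rfl

theorem mul_app (a b : Cl m) (S : Finset (Fin m)) :
    coeff (a * b) S = ∑ T, sg T (symmDiff T S) * coeff a T * coeff b (symmDiff T S) := by
  simp only [← sg_eq]; rfl

theorem cl_ext {a b : Cl m} (h : ∀ S, coeff a S = coeff b S) : a = b := funext h

theorem coeff_add (a b : Cl m) (S) : coeff (a + b) S = coeff a S + coeff b S := rfl
theorem coeff_smul (c : ℂ) (a : Cl m) (S) : coeff (c • a) S = c * coeff a S := rfl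
theorem coeff_rsmul (c : ℝ) (a : Cl m) (S) : coeff (c • a) S = c * coeff a S :=
  Complex.real_smul
theorem coeff_zero (S) : coeff (0 : Cl m) S = 0 := rfl
theorem coeff_one (S : Finset (Fin m)) : coeff (1 : Cl m) S = if S = ∅ then 1 else 0 := rfl
theorem coeff_e (i : Fin m) (S : Finset (Fin m)) : coeff (e m i) S = if S = {i} then 1 else 0 := rfl

theorem cl_mul_assoc (a b c : Cl m) : a * b * c = a * (b * c) := by
  refine cl_ext fun S => ?_
  rw [mul_app, mul_app]
  simp only [mul_app, Finset.mul_sum, Finset.sum_mul]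
  rw [Finset.sum_comm]
  refine Finset.sum_congr rfl fun U _ => ?_
  refine Fintype.sum_equiv (Equiv.mk (fun T => symmDiff U T) (fun T => symmDiff U T)
    (fun T => symmDiff_symmDiff_cancel_left U T) (fun T => symmDiff_symmDiff_cancel_left U T)) _ _ (fun T => ?_)
  simp only [Equiv.coe_fn_mk]
  have e1 : symmDiff (symmDiff U T) (symmDiff U S) = symmDiff T S := by
    rw [symmDiff_comm U T, symmDiff_assoc, symmDiff_symmDiff_cancel_left]
  rw [e1]
  have e2 : sg T (symmDiff T S) * sg U (symmDiff U T) = sg U (symmDiff U S) * sg (symmDiff U T) (symmDiff T S) := by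
    simp only [sg_left, sg_right]
    have := sg_sq U S
    linear_combination (-sg T T * sg T S * sg U U * sg U T) * this
  linear_combination (coeff a U * coeff b (symmDiff U T) * coeff c (symmDiff T S)) * e2

theorem cl_one_mul (a : Cl m) : 1 * a = a := by
  refine cl_ext fun S => ?_
  rw [mul_app, Finset.sum_eq_single ∅]
  · rw [coeff_one, if_pos rfl, show symmDiff ∅ S = S from bot_symmDiff S]; simp [sg]
  · intro T _ hT; rw [coeff_one, if_neg hT]; simp
  · simp

theorem cl_mul_one (a : Cl m) : a * 1 = a := by
  refine cl_ext fun S => ?_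
  rw [mul_app, Finset.sum_eq_single S]
  · rw [coeff_one, symmDiff_self, Finset.bot_eq_empty, if_pos rfl]; simp [sg]
  · intro T _ hT
    rw [coeff_one, if_neg]
    · simp
    · intro h; exact hT (symmDiff_eq_bot.1 h)
  · simp

theorem cl_mul_add (a b c : Cl m) : a * (b + c) = a * b + a * c := by
  refine cl_ext fun S => ?_
  simp only [coeff_add, mul_app, mul_add, Finset.sum_add_distrib]

theorem cl_add_mul (a b c : Cl m) : (a + b) * c = a * c + b * c := by
  refine cl_ext fun S => ?_
  simp only [coeff_add, mul_app, mul_add, add_mul, Finset.sum_add_distrib]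

theorem cl_smul_mul (r : ℂ) (a b : Cl m) : (r • a) * b = r • (a * b) := by
  refine cl_ext fun S => ?_
  simp only [coeff_smul, mul_app, Finset.mul_sum]
  exact Finset.sum_congr rfl fun _ _ => by ring

theorem cl_mul_smul (r : ℂ) (a b : Cl m) : a * (r • b) = r • (a * b) := by
  refine cl_ext fun S => ?_
  simp only [coeff_smul, mul_app, Finset.mul_sum]
  exact Finset.sum_congr rfl fun _ _ => by ring

/-- The ring structure. -/
@[reducible] def clRing : Ring (Cl m) :=
  { (inferInstance : AddCommGroup (Cl m)) with
    mul := fun a b => a * b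
    one := 1
    mul_assoc := cl_mul_assoc
    one_mul := cl_one_mul
    mul_one := cl_mul_one
    left_distrib := cl_mul_add
    right_distrib := cl_add_mul
    zero_mul := fun a => by
      have := cl_smul_mul 0 a a
      rw [zero_smul, zero_smul] at this; exact this
    mul_zero := fun a => by
      have := cl_mul_smul 0 a a
      rw [zero_smul, zero_smul] at this; exact this }

theorem e_mul_e (i j : Fin m) (S : Finset (Fin m)) :
    coeff (e m i * e m j) S = if S = symmDiff {i} {j} then chi i j else 0 := by
  rw [mul_app, Finset.sum_eq_single {i}]
  · simp only [coeff_e, if_true]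
    have : (symmDiff {i} S = {j}) ↔ S = symmDiff {i} {j} := by
      constructor
      · intro h; rw [← h, symmDiff_symmDiff_cancel_left]
      · intro h; rw [h, symmDiff_symmDiff_cancel_left]
    by_cases h : S = symmDiff {i} {j}
    · rw [if_pos h, if_pos (this.2 h), this.2 h]; simp [sg]
    · rw [if_neg h, if_neg (fun h' => h (this.1 h'))]; simp
  · intro T _ hT; rw [coeff_e, if_neg hT]; simp
  · simp

theorem e_anti (i j : Fin m) :
    e m i * e m j + e m j * e m i = (if i = j then (-2:ℂ) else 0) • (1 : Cl m) := by
  refine cl_ext fun S => ?_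
  rw [coeff_add, e_mul_e, e_mul_e, coeff_smul, coeff_one, symmDiff_comm ({j} : Finset (Fin m)) {i}]
  by_cases h : i = j
  · subst h
    simp only [symmDiff_self, if_true, chi, le_refl]
    show (if S = ∅ then (-1:ℂ) else 0) + (if S = ∅ then -1 else 0) = _
    split_ifs <;> norm_num
  · rw [if_neg h, zero_mul]
    unfold chi
    rcases lt_or_gt_of_ne h with h' | h'
    · split_ifs <;> simp [h'.le, h'.not_ge]
      all_goals omega
    · split_ifs <;> simp [h'.le, h'.not_ge]
      all_goals omega

/-! Abstract Clifford computations -/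
section abs
variable {A : Type*} [Ring A] [Algebra ℂ A] (E : Fin m → A)

/-- vectors -/
def av (x : Fin m → ℝ) : A := ∑ i, (x i : ℂ) • E i

/-- Clifford relations -/
def IsClif : Prop := ∀ i j, E i * E j + E j * E i = (if i = j then (-2:ℂ) else 0) • (1:A)

theorem E_av (hE : IsClif E) (i : Fin m) (x : Fin m → ℝ) : E i * av E x = -(2 * (x i:ℂ)) • (1:A) - av E x * E i := by
  rw [eq_sub_iff_add_eq, av, Finset.mul_sum, Finset.sum_mul, ← Finset.sum_add_distrib]
  have : ∀ j, E i * ((x j : ℂ) • E j) + ((x j:ℂ) • E j) * E i =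
      if i = j then (-(2 * (x i:ℂ))) • (1:A) else 0 := by
    intro j
    rw [mul_smul_comm, smul_mul_assoc, ← smul_add, hE]
    split_ifs with h
    · subst h; rw [smul_smul]; congr 1; ring
    · simp
  simp only [this, Finset.sum_ite_eq, Finset.mem_univ, if_true]

theorem av_anti (hE : IsClif E) (x y : Fin m → ℝ) : av E x * av E y = -(2 * (ip x y:ℂ)) • (1:A) - av E y * av E x := by
  conv_lhs => rw [av, Finset.sum_mul]
  simp only [smul_mul_assoc, E_av E hE, smul_sub, smul_smul, Finset.sum_sub_distrib]
  congr 1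
  · rw [← Finset.sum_smul, ip]
    congr 1
    push_cast
    rw [Finset.mul_sum, ← Finset.sum_neg_distrib]
    exact Finset.sum_congr rfl fun _ _ => by ring
  · conv_rhs => rw [av, av, Finset.mul_sum]
    simp only [mul_smul_comm]; rfl

theorem av_sq (hE : IsClif E) (x : Fin m → ℝ) : av E x * av E x = -(ip x x : ℂ) • (1:A) := by
  have h := av_anti E hE x x
  have h2 : (2:ℂ) • (av E x * av E x) = (2:ℂ) • (-(ip x x : ℂ) • (1:A)) := by
    rw [two_smul]; nth_rewrite 1 [h]; rw [sub_add_cancel, smul_smul]; congr 1; ring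
  exact smul_right_injective A (two_ne_zero : (2:ℂ) ≠ 0) h2

theorem sum_EE (hE : IsClif E) : ∑ i, E i * E i = -(m:ℂ) • (1:A) := by
  have : ∀ i, E i * E i = (-1:ℂ) • (1:A) := by
    intro i
    have h := hE i i
    rw [if_pos rfl, ← two_smul ℂ] at h
    apply smul_right_injective A (two_ne_zero : (2:ℂ) ≠ 0)
    simp only []
    rw [h, smul_smul]; norm_num
  simp only [this, Finset.sum_const, Finset.card_univ, Fintype.card_fin]
  rw [← Nat.cast_smul_eq_nsmul ℂ, smul_smul]; congr 1; ring

theorem sum_EvE (hE : IsClif E) (x : Fin m → ℝ) : ∑ i, E i * av E x * E i = ((m:ℂ) - 2) • av E x := by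
  simp only [E_av E hE, sub_mul, Finset.sum_sub_distrib, mul_assoc, ← Finset.mul_sum, sum_EE E hE,
    smul_mul_assoc, one_mul]
  have : ∑ i, -(2 * (x i : ℂ)) • E i = (-2:ℂ) • av E x := by
    rw [av, Finset.smul_sum]; refine Finset.sum_congr rfl fun i _ => ?_
    rw [smul_smul]; congr 1; ring
  rw [this, mul_smul_comm, mul_one, ← sub_smul]; congr 1; ring

theorem sum_EvvE (hE : IsClif E) (x y : Fin m → ℝ) : ∑ i, E i * (av E x * av E y) * E i =
    -(2:ℂ) • (av E y * av E x) - ((m:ℂ) - 2) • (av E x * av E y) := by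
  have h : ∀ i, E i * (av E x * av E y) * E i = -(2 * (x i : ℂ)) • (av E y * E i) -
      av E x * (E i * av E y * E i) := by
    intro i
    rw [← mul_assoc, E_av E hE, sub_mul, sub_mul, smul_mul_assoc, smul_mul_assoc, one_mul]
    simp only [mul_assoc]
  simp only [h, Finset.sum_sub_distrib, ← Finset.mul_sum, sum_EvE E hE, mul_smul_comm]
  congr 1
  have : ∀ i, -(2 * (x i : ℂ)) • (av E y * E i) = (-2:ℂ) • (av E y * ((x i:ℂ) • E i)) := by
    intro i; rw [mul_smul_comm, smul_smul]; congr 1; ring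
  simp only [this, ← Finset.smul_sum, ← Finset.mul_sum]; rfl


/-- wedge product -/
def aw (x y : Fin m → ℝ) : A := av E x * av E y + (ip x y : ℂ) • (1:A)

theorem av_add (x y : Fin m → ℝ) : av E (x + y) = av E x + av E y := by
  simp only [av, ← Finset.sum_add_distrib, ← add_smul]
  refine Finset.sum_congr rfl fun i _ => ?_
  simp

theorem av_smul (c : ℝ) (x : Fin m → ℝ) : av E (c • x) = (c:ℂ) • av E x := by
  simp only [av, Finset.smul_sum, smul_smul]
  refine Finset.sum_congr rfl fun i _ => ?_
  simp

theorem ip_add_left (x y z : Fin m → ℝ) : ip (x + y) z = ip x z + ip y z := by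
  simp only [ip, ← Finset.sum_add_distrib]
  exact Finset.sum_congr rfl fun i _ => by simp only [Pi.add_apply]; ring
theorem ip_comm (x y : Fin m → ℝ) : ip x y = ip y x := by
  unfold ip; exact Finset.sum_congr rfl fun i _ => mul_comm _ _
theorem ip_smul_left (c : ℝ) (x z : Fin m → ℝ) : ip (c • x) z = c * ip x z := by
  simp only [ip, Finset.mul_sum]
  exact Finset.sum_congr rfl fun i _ => by simp only [Pi.smul_apply, smul_eq_mul]; ring

theorem aw_add_left (x y z : Fin m → ℝ) : aw E (x + y) z = aw E x z + aw E y z := by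
  simp only [aw, av_add, ip_add_left, add_mul, Complex.ofReal_add, add_smul]; abel
theorem aw_smul_left (c : ℝ) (x z : Fin m → ℝ) : aw E (c • x) z = (c:ℂ) • aw E x z := by
  simp only [aw, av_smul, ip_smul_left, smul_mul_assoc, Complex.ofReal_mul, smul_add, smul_smul]
theorem aw_anti (hE : IsClif E) (x y : Fin m → ℝ) : aw E x y = - aw E y x := by
  rw [aw, aw, av_anti E hE, ip_comm y x]; module
theorem aw_self (hE : IsClif E) (x : Fin m → ℝ) : aw E x x = 0 := by
  rw [aw, av_sq E hE]; module

theorem aw_single_sum (x y : Fin m → ℝ) : ∑ i, (x i : ℂ) • aw E (Pi.single i 1) y = aw E x y := by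
  have h : ∀ i, av E (Pi.single i 1) = E i := by
    intro i
    rw [av, Finset.sum_eq_single i]
    · simp
    · intro j _ hj; simp [hj]
    · simp
  have h2 : ∀ i, ip (Pi.single i 1) y = y i := by
    intro i; simp [ip, Pi.single_apply]
  simp only [aw, h, h2, smul_add, Finset.sum_add_distrib, smul_smul, ← Finset.sum_smul]
  congr 1
  · simp only [← smul_mul_assoc, ← Finset.sum_mul]; rfl
  · rw [ip]; push_cast; rfl

theorem av_single (i : Fin m) : av E (Pi.single i 1) = E i := by
  rw [av, Finset.sum_eq_single i]
  · simp
  · intro j _ hj; simp [hj]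
  · simp

theorem aw_contract (hE : IsClif E) (x y : Fin m → ℝ) :
    ∑ i, aw E (Pi.single i 1) x * aw E y (Pi.single i 1) =
      (((m:ℂ)-1) * ip x y) • (1:A) + ((m:ℂ)-2) • aw E y x := by
  have h2 : ∀ (i : Fin m) (y : Fin m → ℝ), ip (Pi.single i 1) y = y i := by
    intro i y; simp [ip, Pi.single_apply]
  have h3 : ∀ (i : Fin m) (y : Fin m → ℝ), ip y (Pi.single i 1) = y i := by
    intro i y; simp [ip, Pi.single_apply]
  have h : ∀ i, aw E (Pi.single i 1) x * aw E y (Pi.single i 1) =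
    E i * (av E x * av E y) * E i + (((y i:ℂ) • E i) * av E x + av E y * ((x i:ℂ) • E i)) +
      (((x i * y i:ℝ)):ℂ) • (1:A) := by
    intro i
    simp only [aw, av_single, h2, h3, add_mul, mul_add, smul_mul_assoc, mul_smul_comm, one_mul, mul_one,
      smul_smul, Complex.ofReal_mul]
    simp only [mul_assoc]
    rw [mul_comm (x i : ℂ), smul_add, smul_smul]
    abel
  simp only [h, Finset.sum_add_distrib, sum_EvvE E hE, ← Finset.mul_sum, ← Finset.sum_mul,
    ← Finset.sum_smul, ← Complex.ofReal_sum]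
  have a := av_anti E hE x y
  have i1 : ∑ i, x i * y i = ip x y := rfl
  have i2 : ∑ i, (y i : ℂ) • E i = av E y := rfl
  have i3 : ∑ i, (x i : ℂ) • E i = av E x := rfl
  rw [i1, i2, i3, a, aw, ip_comm y x]
  module

theorem aw_sq (hE : IsClif E) (x y : Fin m → ℝ) (hx : ip x x = 1) (hy : ip y y = 1) :
    aw E y x * aw E y x = (((ip x y)^2 - 1 : ℝ) : ℂ) • (1:A) := by
  have a := av_anti E hE x y
  have h : av E y * av E x * (av E y * av E x) = -(2 * (ip x y:ℂ)) • (av E y * av E x) - (1:A) := by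
    calc av E y * av E x * (av E y * av E x) = av E y * (av E x * av E y) * av E x := by
          simp only [mul_assoc]
      _ = -(2 * (ip x y:ℂ)) • (av E y * av E x) - (av E y * av E y) * (av E x * av E x) := by
          rw [a, mul_sub, sub_mul, mul_smul_comm, smul_mul_assoc, mul_one]; simp only [mul_assoc]
      _ = _ := by rw [av_sq E hE, av_sq E hE, hx, hy]; simp
  simp only [aw, add_mul, mul_add, smul_mul_assoc, mul_smul_comm, one_mul, mul_one]
  rw [h, ip_comm y x]
  push_cast
  module

end abs

section conc
attribute [local instance] clRing

/-- The algebra structure. -/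
@[reducible] def clAlg : Algebra ℂ (Cl m) := Algebra.ofModule cl_smul_mul cl_mul_smul
attribute [local instance] clAlg

theorem e_clif : IsClif (e m) := e_anti

theorem vec_eq (x : Fin m → ℝ) : vec m x = av (e m) x := rfl

theorem wedge_eq (x y : Fin m → ℝ) : wedge m x y = aw (e m) x y := by
  have hs : ∀ f : Fin m → Fin m → Cl m, ∑ j, ∑ k, f j k = (∑ j, ∑ k, if j < k then f j k + f k j else 0) +
      ∑ j, f j j := by
    intro f
    have h1 : ∀ j k, f j k = (if j < k then f j k else 0) + (if k < j then f j k else 0) +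
        (if j = k then f j k else 0) := by
      intro j k
      rcases lt_trichotomy j k with h | h | h
      · simp [h, h.not_gt, h.ne]
      · simp [h]
      · simp [h, h.not_gt, h.ne']
    have h2 : ∑ j, ∑ k, f j k = ∑ j, ∑ k, ((if j < k then f j k else 0) + (if k < j then f j k else 0) +
        (if j = k then f j k else 0)) :=
      Finset.sum_congr rfl fun j _ => Finset.sum_congr rfl fun k _ => h1 j k
    rw [h2]
    simp only [Finset.sum_add_distrib]
    rw [Finset.sum_comm (f := fun j k => if k < j then f j k else 0)]
    simp only [← Finset.sum_add_distrib]
    refine Finset.sum_congr rfl fun j _ => ?_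
    rw [Finset.sum_add_distrib]
    congr 1
    · refine Finset.sum_congr rfl fun k _ => ?_
      split_ifs <;> simp
    · simp
  have h : av (e m) x * av (e m) y = ∑ j, ∑ k, ((x j * y k : ℝ) : ℂ) • (e m j * e m k) := by
    rw [av, av, Finset.sum_mul]
    simp only [Finset.mul_sum, smul_mul_assoc, mul_smul_comm, smul_smul]
    push_cast
    exact Finset.sum_congr rfl fun j _ => Finset.sum_congr rfl fun k _ => by rw [mul_comm]
  rw [aw, h, hs]
  have hd : ∑ j, ((x j * y j : ℝ) : ℂ) • (e m j * e m j) = -(ip x y : ℂ) • (1 : Cl m) := by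
    have : ∀ i, e m i * e m i = (-1:ℂ) • (1:Cl m) := by
      intro i
      have h := e_anti i i
      rw [if_pos rfl, ← two_smul ℂ] at h
      apply smul_right_injective (Cl m) (two_ne_zero : (2:ℂ) ≠ 0)
      simp only []
      rw [h, smul_smul]; norm_num
    simp only [this, smul_smul, ← Finset.sum_smul, ip]
    congr 1; push_cast; rw [← Finset.sum_neg_distrib]; simp
  rw [hd, add_assoc, ← add_smul, neg_add_cancel, zero_smul, add_zero, wedge]
  congr 1; funext j; congr 1; funext k
  split_ifs with hjk
  · have h := e_anti k j
    rw [if_neg hjk.ne', zero_smul] at h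
    rw [eq_neg_of_add_eq_zero_left h]
    push_cast; module
  · rfl

end conc


/-! ### Integrals of products -/

theorem rsmul_eq (r : ℝ) (a : Cl m) : r • a = (r : ℂ) • a :=
  cl_ext fun S => by rw [coeff_rsmul, coeff_smul]

/-- normed space over the complex numbers -/
@[reducible] def clNS : NormedSpace ℂ (Cl m) :=
  { (inferInstance : Module ℂ (Cl m)) with
    norm_smul_le := fun c a => norm_smul_le (α := ℂ) (β := Finset (Fin m) → ℂ) c a }

theorem cl_fd : FiniteDimensional ℝ (Cl m) :=
  inferInstanceAs (FiniteDimensional ℝ (Finset (Fin m) → ℂ))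

/-- multiplication as a bilinear map -/
def mulLin : Cl m →ₗ[ℝ] Cl m →ₗ[ℝ] Cl m :=
  LinearMap.mk₂ ℝ (fun a b => a * b) cl_add_mul
    (fun r a b => by rw [rsmul_eq, cl_smul_mul, ← rsmul_eq]) cl_mul_add
    (fun r a b => by rw [rsmul_eq, cl_mul_smul, ← rsmul_eq])

/-- multiplication as a continuous bilinear map -/
def mulL : Cl m →L[ℝ] Cl m →L[ℝ] Cl m :=
  haveI := cl_fd (m := m)
  LinearMap.toContinuousLinearMap
    ((LinearMap.toContinuousLinearMap (E := Cl m) (F' := Cl m) (𝕜 := ℝ)).toLinearMap ∘ₗ mulLin)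

theorem mulL_apply (a b : Cl m) : mulL a b = a * b := rfl

/-- shortcut -/
@[reducible] def rSM : SMul ℝ (Cl m) := inferInstance
/-- shortcut -/
@[reducible] def rMod : Module ℝ (Cl m) := NormedSpace.toModule
/-- shortcut -/
@[reducible] def rNS : NormedSpace ℝ (Cl m) := inferInstance

/-- coordinates -/
def co (p : EE m) : Fin m → ℝ := fun i => p i

theorem co_ip (p q : EE m) : ip (co p) (co q) = inner ℝ p q := (inner_eq_sum p q).symm

section conc2
attribute [local instance] clRing clAlg clNS
attribute [local instance 5000] rNS rMod rSM

/-- shorthand -/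
def wd (p q : EE m) : Cl m := aw (e m) (co p) (co q)

/-- basis vectors -/
def eb (i : Fin m) : EE m := EuclideanSpace.single i 1

theorem co_eb (i : Fin m) : co (eb i) = Pi.single i 1 := by
  funext j; simp [co, eb, Pi.single_apply]

theorem wd_add_left (p q z : EE m) : wd (p + q) z = wd p z + wd q z := aw_add_left _ _ _ _
theorem wd_smul_left (c : ℝ) (p q : EE m) : wd (c • p) q = c • wd p q := by
  rw [rsmul_eq]; exact aw_smul_left _ _ _ _
theorem wd_anti (p q : EE m) : wd p q = - wd q p := aw_anti _ e_clif _ _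
theorem wd_self (p : EE m) : wd p p = 0 := aw_self _ e_clif _
theorem wd_sub_left (p q z : EE m) : wd (p - q) z = wd p z - wd q z := by
  rw [sub_eq_add_neg, ← neg_one_smul ℝ q, wd_add_left, wd_smul_left]; module

/-- projected basis vectors -/
def vb (x : EE m) (i : Fin m) : EE m := eb i - x i • x

theorem inner_eb (i : Fin m) (p : EE m) : inner ℝ (eb i) p = p i := by
  simp [eb, EuclideanSpace.inner_single_left]

theorem inner_vb (x : EE m) (i : Fin m) (p : EE m) : inner ℝ (vb x i) p = p i - x i * inner ℝ x p := by
  rw [vb, inner_sub_left, inner_eb, real_inner_smul_left]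

theorem vb_orth (x : EE m) (hx : ‖x‖ = 1) (i : Fin m) : inner ℝ x (vb x i) = 0 := by
  rw [real_inner_comm, inner_vb, real_inner_self_eq_norm_sq, hx]; simp

theorem wd_sum (p x : EE m) : ∑ i, (p i) • wd (eb i) x = wd p x := by
  rw [wd, ← aw_single_sum]
  refine Finset.sum_congr rfl fun i _ => ?_
  rw [rsmul_eq, wd, co_eb]; rfl

theorem W1 (p x : EE m) : ∑ i, (inner ℝ (vb x i) p) • wd (eb i) x = wd p x := by
  simp only [inner_vb, sub_smul, Finset.sum_sub_distrib, mul_comm (x _), mul_smul, ← Finset.smul_sum, wd_sum, wd_self]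
  simp

theorem W2 (p y : EE m) : ∑ i, (inner ℝ (vb y i) p) • wd y (eb i) = wd y p := by
  rw [wd_anti y p, ← W1, ← Finset.sum_neg_distrib]
  refine Finset.sum_congr rfl fun i _ => ?_
  rw [wd_anti y, smul_neg]

theorem wd_contract (x y : EE m) : ∑ i, wd (eb i) x * wd y (eb i) =
    (((m:ℝ)-1) * inner ℝ x y) • (1 : Cl m) + ((m:ℝ)-2) • wd y x := by
  have h := aw_contract (e m) e_clif (co x) (co y)
  simp only [← co_eb, co_ip] at h
  rw [rsmul_eq, rsmul_eq]
  push_cast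
  exact h

theorem wd_sq (x y : EE m) (hx : ‖x‖ = 1) (hy : ‖y‖ = 1) :
    wd y x * wd y x = ((inner ℝ x y)^2 - 1) • (1 : Cl m) := by
  have h := aw_sq (e m) e_clif (co x) (co y) (by rw [co_ip, real_inner_self_eq_norm_sq, hx]; simp)
    (by rw [co_ip, real_inner_self_eq_norm_sq, hy]; simp)
  rw [co_ip] at h
  rw [rsmul_eq]; exact h

theorem wd_cont_left (x : EE m) : Continuous fun η : SS m => wd (η : EE m) x := by
  have h : (fun η : SS m => wd (η : EE m) x) = fun η : SS m => ∑ i, (inner ℝ (vb x i) (η : EE m)) • wd (eb i) x :=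
    funext fun η => (W1 _ x).symm
  rw [h]; fun_prop

theorem wd_cont_right (x : EE m) : Continuous fun η : SS m => wd x (η : EE m) := by
  have h : (fun η : SS m => wd x (η : EE m)) = fun η : SS m => ∑ i, (inner ℝ (vb x i) (η : EE m)) • wd x (eb i) :=
    funext fun η => (W2 _ x).symm
  rw [h]; fun_prop

theorem I2 (hm : 2 ≤ m) {lam : ℝ} (hl : 0 ≤ lam) (hlm : 2*lam+1 = (m:ℝ)-1) (k l : ℕ) (x y : EE m)
    (hx : ‖x‖ = 1) (hy : ‖y‖ = 1) :
    ∫ η : SS m, (Dg lam k (inner ℝ x (η:EE m)) * gegT lam l (inner ℝ y (η:EE m))) • wd (η : EE m) x ∂om m =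
      (if k = l then Dg lam k (inner ℝ x y) else 0) • wd y x := by
  have h : ∀ η : SS m, (Dg lam k (inner ℝ x (η:EE m)) * gegT lam l (inner ℝ y (η:EE m))) • wd (η : EE m) x =
      ∑ i, (inner ℝ (vb x i) (η:EE m) * Dg lam k (inner ℝ x (η:EE m)) * gegT lam l (inner ℝ y (η:EE m))) • wd (eb i) x := by
    intro η
    rw [← W1, Finset.smul_sum]
    refine Finset.sum_congr rfl fun i _ => ?_
    rw [smul_smul]; congr 1; ring
  simp only [h]
  have c1 := cont_comp_inner (continuous_Dg lam k) x
  have c2 := cont_comp_inner (continuous_gegT lam l) y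
  rw [integral_finsetSum _ (fun i _ => sph_integrable hm _ (by fun_prop))]
  simp only [integral_smul_const, V1 hm hl hlm k l x y _ hx hy (vb_orth x hx _)]
  split_ifs
  · rw [← W1 y x, Finset.smul_sum]
    refine Finset.sum_congr rfl fun i _ => ?_
    rw [smul_smul, mul_comm]
  · simp

theorem I3 (hm : 2 ≤ m) {lam : ℝ} (hl : 0 ≤ lam) (hlm : 2*lam+1 = (m:ℝ)-1) (k l : ℕ) (x y : EE m)
    (hx : ‖x‖ = 1) (hy : ‖y‖ = 1) :
    ∫ η : SS m, (gegT lam k (inner ℝ x (η:EE m)) * Dg lam l (inner ℝ y (η:EE m))) • wd y (η : EE m) ∂om m =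
      (if k = l then Dg lam k (inner ℝ x y) else 0) • wd y x := by
  have h := I2 hm hl hlm l k y x hy hx
  have e : ∀ η : SS m, (gegT lam k (inner ℝ x (η:EE m)) * Dg lam l (inner ℝ y (η:EE m))) • wd y (η : EE m) =
    -((Dg lam l (inner ℝ y (η:EE m)) * gegT lam k (inner ℝ x (η:EE m))) • wd (η : EE m) y) := by
    intro η; rw [wd_anti y, smul_neg, mul_comm]
  simp only [e]
  rw [integral_neg, h, wd_anti x y, smul_neg, neg_neg, real_inner_comm]
  by_cases hk : k = l
  · subst hk; rfl
  · rw [if_neg hk, if_neg (Ne.symm hk)]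

theorem I4 (hm : 2 ≤ m) {lam : ℝ} (hl : 0 ≤ lam) (hlm : 2*lam+1 = (m:ℝ)-1) (k l : ℕ) (x y : EE m)
    (hx : ‖x‖ = 1) (hy : ‖y‖ = 1) :
    ∫ η : SS m, (Dg lam k (inner ℝ x (η:EE m)) * Dg lam l (inner ℝ y (η:EE m))) •
        (wd (η : EE m) x * wd y (η : EE m)) ∂om m =
      if k = l then (k*(k+2*lam)/(2*(k+lam))^2 * gegT lam k (inner ℝ x y)) • (1 : Cl m) +
        (lam/(k+lam) * Dg lam k (inner ℝ x y)) • wd y x else 0 := by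
  have h : ∀ η : SS m, (Dg lam k (inner ℝ x (η:EE m)) * Dg lam l (inner ℝ y (η:EE m))) •
        (wd (η : EE m) x * wd y (η : EE m)) =
      ∑ i, ∑ j, ((inner ℝ (vb x i) (η:EE m) * inner ℝ (vb y j) (η:EE m)) * (Dg lam k (inner ℝ x (η:EE m)) *
        Dg lam l (inner ℝ y (η:EE m)))) • (wd (eb i) x * wd y (eb j)) := by
    intro η
    rw [← W1 _ x, ← W2 _ y, Finset.sum_mul, Finset.smul_sum]
    refine Finset.sum_congr rfl fun i _ => ?_
    rw [Finset.mul_sum, Finset.smul_sum]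
    refine Finset.sum_congr rfl fun j _ => ?_
    simp only [rsmul_eq]
    rw [smul_mul_assoc, mul_smul_comm, smul_smul, smul_smul]
    congr 1; push_cast; ring
  simp only [h]
  have c1 := cont_comp_inner (continuous_Dg lam k) x
  have c2 := cont_comp_inner (continuous_Dg lam l) y
  rw [integral_finsetSum _ (fun i _ => sph_integrable hm _ (by fun_prop))]
  have h2 : ∀ i, ∫ η : SS m, ∑ j, ((inner ℝ (vb x i) (η:EE m) * inner ℝ (vb y j) (η:EE m)) *
      (Dg lam k (inner ℝ x (η:EE m)) * Dg lam l (inner ℝ y (η:EE m)))) • (wd (eb i) x * wd y (eb j)) ∂om m =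
      ∑ j, (if k = l then (inner ℝ (vb x i) (vb y j) * Dg lam k (inner ℝ x y) +
        inner ℝ (vb x i) y * inner ℝ x (vb y j) * dDg lam k (inner ℝ x y)) / (2*(k+lam)) else 0) •
        (wd (eb i) x * wd y (eb j)) := by
    intro i
    rw [integral_finsetSum _ (fun i _ => sph_integrable hm _ (by fun_prop))]
    simp only [integral_smul_const, V2 hm hl hlm k l x y _ _ hx hy (vb_orth x hx _) (vb_orth y hy _)]
  simp only [h2]
  split_ifs with hk
  swap
  · simp
  set w : ℝ := inner ℝ x y with hw
  have s1 : ∑ i, ∑ j, inner ℝ (vb x i) (vb y j) • (wd (eb i) x * wd y (eb j)) =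
      (((m:ℝ)-1) * w) • (1 : Cl m) + ((m:ℝ)-2) • wd y x := by
    rw [Finset.sum_comm]
    have : ∀ j, ∑ i, inner ℝ (vb x i) (vb y j) • (wd (eb i) x * wd y (eb j)) =
        wd (eb j) x * wd y (eb j) - wd y x * ((y j) • wd y (eb j)) := by
      intro j
      have : ∀ i, inner ℝ (vb x i) (vb y j) • (wd (eb i) x * wd y (eb j)) =
        (inner ℝ (vb x i) (vb y j) • wd (eb i) x) * wd y (eb j) := by
        intro i; simp only [rsmul_eq]; rw [smul_mul_assoc]
      simp only [this, ← Finset.sum_mul, W1]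
      rw [vb, wd_sub_left, wd_smul_left, sub_mul]
      simp only [rsmul_eq]; rw [smul_mul_assoc, mul_smul_comm]
    simp only [this, Finset.sum_sub_distrib, ← Finset.mul_sum, wd_contract]
    have : ∑ j, y j • wd y (eb j) = 0 := by
      have h := wd_sum y y
      rw [wd_self] at h
      rw [← neg_eq_zero, ← Finset.sum_neg_distrib, ← h]
      refine Finset.sum_congr rfl fun i _ => ?_
      rw [wd_anti y, smul_neg, neg_neg]
    rw [this, mul_zero, sub_zero]
  have s2 : ∑ i, ∑ j, (inner ℝ (vb x i) y * inner ℝ x (vb y j)) • (wd (eb i) x * wd y (eb j)) =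
      (w^2 - 1) • (1 : Cl m) := by
    rw [← wd_sq x y hx hy]
    have hh := congrArg₂ (fun a b : Cl m => a * b) (W1 y x) (W2 x y)
    rw [← hh, Finset.sum_mul]
    refine Finset.sum_congr rfl fun i _ => ?_
    rw [Finset.mul_sum]
    refine Finset.sum_congr rfl fun j _ => ?_
    simp only [rsmul_eq]
    rw [smul_mul_assoc, mul_smul_comm, smul_smul, real_inner_comm x]
    push_cast; rfl
  have s3 : ∀ i j, ((inner ℝ (vb x i) (vb y j) * Dg lam k w + inner ℝ (vb x i) y * inner ℝ x (vb y j) * dDg lam k w) /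
      (2*(k+lam))) • (wd (eb i) x * wd y (eb j)) =
      (Dg lam k w / (2*(k+lam))) • (inner ℝ (vb x i) (vb y j) • (wd (eb i) x * wd y (eb j))) +
      (dDg lam k w / (2*(k+lam))) • ((inner ℝ (vb x i) y * inner ℝ x (vb y j)) • (wd (eb i) x * wd y (eb j))) := by
    intro i j
    rw [smul_smul, smul_smul, ← add_smul]; congr 1; ring
  simp only [s3, Finset.sum_add_distrib, ← Finset.smul_sum, s1, s2]
  have g := G2 hl w k
  have em : (m:ℝ) = 2*lam+2 := by linarith
  rw [em]
  have r1 : (k*(k+2*lam)/(2*(k+lam))^2 * gegT lam k w) =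
      Dg lam k w / (2*(k+lam)) * ((2*lam+2-1)*w) + dDg lam k w / (2*(k+lam)) * (w^2-1) := by
    have : (k*(k+2*lam)/(2*(k+lam))^2 * gegT lam k w) =
      -(1/(2*(k+lam))) * (-(k*(k+2*lam)/(2*(k+lam)))*gegT lam k w) := by
      rw [sq]; simp only [div_eq_mul_inv, mul_inv]; ring
    rw [this, ← g]; ring
  have r2 : lam/(k+lam) * Dg lam k w = Dg lam k w / (2*(k+lam)) * (2*lam+2-2) := by
    simp only [div_eq_mul_inv, mul_inv]; ring
  rw [r1, r2]
  module

theorem prod_int (hm : 2 ≤ m) {lam : ℝ} (hl : 0 ≤ lam) (hlm : 2*lam+1 = (m:ℝ)-1) (k l : ℕ) (x y : EE m)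
    (hx : ‖x‖ = 1) (hy : ‖y‖ = 1) (α β γ δ : ℂ) :
    ∫ η : SS m, ((α * (gegT lam k (inner ℝ x (η:EE m)) : ℝ)) • (1 : Cl m) +
        (β * (Dg lam k (inner ℝ x (η:EE m)) : ℝ)) • wd (η : EE m) x) *
      ((γ * (gegT lam l (inner ℝ y (η:EE m)) : ℝ)) • (1 : Cl m) +
        (δ * (Dg lam l (inner ℝ y (η:EE m)) : ℝ)) • wd y (η : EE m)) ∂om m =
      if k = l then ((α*γ + β*δ*((k*(k+2*lam)/(2*(k+lam))^2 : ℝ) : ℂ)) * (gegT lam k (inner ℝ x y) : ℝ)) • (1 : Cl m) +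
        ((β*γ+α*δ+β*δ*((lam/(k+lam) : ℝ):ℂ)) * (Dg lam k (inner ℝ x y) : ℝ)) • wd y x else 0 := by
  have h : ∀ η : SS m, ((α * (gegT lam k (inner ℝ x (η:EE m)) : ℝ)) • (1 : Cl m) +
        (β * (Dg lam k (inner ℝ x (η:EE m)) : ℝ)) • wd (η : EE m) x) *
      ((γ * (gegT lam l (inner ℝ y (η:EE m)) : ℝ)) • (1 : Cl m) +
        (δ * (Dg lam l (inner ℝ y (η:EE m)) : ℝ)) • wd y (η : EE m)) =
      (α*γ) • ((gegT lam k (inner ℝ x (η:EE m)) * gegT lam l (inner ℝ y (η:EE m))) • (1 : Cl m)) +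
      (β*γ) • ((Dg lam k (inner ℝ x (η:EE m)) * gegT lam l (inner ℝ y (η:EE m))) • wd (η : EE m) x) +
      (α*δ) • ((gegT lam k (inner ℝ x (η:EE m)) * Dg lam l (inner ℝ y (η:EE m))) • wd y (η : EE m)) +
      (β*δ) • ((Dg lam k (inner ℝ x (η:EE m)) * Dg lam l (inner ℝ y (η:EE m))) •
        (wd (η : EE m) x * wd y (η : EE m))) := by
    intro η
    simp only [rsmul_eq]
    rw [add_mul, mul_add, mul_add]
    simp only [smul_mul_assoc, mul_smul_comm, one_mul, mul_one, smul_smul]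
    push_cast
    module
  simp only [h]
  have c1 := cont_comp_inner (continuous_Dg lam k) x
  have c2 := cont_comp_inner (continuous_Dg lam l) y
  have c3 := cont_comp_inner (continuous_gegT lam k) x
  have c4 := cont_comp_inner (continuous_gegT lam l) y
  have c5 := wd_cont_left x
  have c6 := wd_cont_right y
  have c7 : Continuous fun η : SS m => wd (η : EE m) x * wd y (η : EE m) := by
    have : Continuous fun η : SS m => mulL (wd (η : EE m) x) (wd y (η : EE m)) := by fun_prop
    exact this
  rw [integral_add (sph_integrable hm _ (by fun_prop)) (sph_integrable hm _ (by fun_prop)),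
    integral_add (sph_integrable hm _ (by fun_prop)) (sph_integrable hm _ (by fun_prop)),
    integral_add (sph_integrable hm _ (by fun_prop)) (sph_integrable hm _ (by fun_prop)),
    integral_smul, integral_smul, integral_smul, integral_smul, I2 hm hl hlm k l x y hx hy,
    I3 hm hl hlm k l x y hx hy, I4 hm hl hlm k l x y hx hy, integral_smul_const, N_eq hm hl hlm k l x y hx hy]
  split_ifs
  · simp only [rsmul_eq]; push_cast; module
  · simp

end conc2


/-! ### Scalar series for the kernel -/

/-- ratio of the two normalisations of the Gegenbauer polynomials -/
def rhoG (lam : ℝ) (k : ℕ) : ℝ := if k = 0 then 1 else lam / (k + lam)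

theorem rho_abs {lam : ℝ} (hl : 0 ≤ lam) (k : ℕ) : |rhoG lam k| ≤ 1 := by
  unfold rhoG
  split_ifs
  · simp
  · rw [abs_of_nonneg (by positivity)]
    exact div_le_one_of_le₀ (by linarith [(Nat.cast_nonneg k : (0:ℝ) ≤ k)]) (by positivity)

theorem geg_rho {lam : ℝ} (hl : 0 ≤ lam) (w : ℝ) (k : ℕ) : geg lam k w = rhoG lam k * gegT lam k w := by
  unfold rhoG
  split_ifs with h
  · subst h; rw [gegT_zero]; simp [geg]
  · have hk : (0:ℝ) < k := by exact_mod_cast Nat.pos_of_ne_zero h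
    have h0 : (k:ℝ) + lam ≠ 0 := by positivity
    have := (G3 hl w k).1
    field_simp
    linarith

/-- scalar coefficient -/
def ak (u : ℂ) (lam : ℝ) (k : ℕ) : ℂ := (u + (-1)^k)/2 * (rhoG lam k : ℝ) - (u - (-1)^k)/2
/-- bivector coefficient -/
def bk (u : ℂ) (k : ℕ) : ℂ := -(u + (-1)^k)

theorem eps_norm (k : ℕ) : ‖(-1:ℂ)^k‖ = 1 := by simp

theorem bk_norm {u : ℂ} (hu : ‖u‖ = 1) (k : ℕ) : ‖bk u k‖ ≤ 2 := by
  rw [bk, norm_neg]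
  refine (norm_add_le _ _).trans ?_
  rw [hu, eps_norm]; norm_num

theorem ak_norm {u : ℂ} (hu : ‖u‖ = 1) {lam : ℝ} (hl : 0 ≤ lam) (k : ℕ) : ‖ak u lam k‖ ≤ 2 := by
  rw [ak]
  refine (norm_sub_le _ _).trans ?_
  have h1 : ‖u + (-1:ℂ)^k‖ ≤ 2 := by
    refine (norm_add_le _ _).trans ?_
    rw [hu, eps_norm]; norm_num
  have h2 : ‖u - (-1:ℂ)^k‖ ≤ 2 := by
    refine (norm_sub_le _ _).trans ?_
    rw [hu, eps_norm]; norm_num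
  have h3 := rho_abs hl k
  rw [norm_mul, norm_div, norm_div, Complex.norm_real, Complex.norm_ofNat, Real.norm_eq_abs]
  have : ‖u + (-1:ℂ)^k‖/2 * |rhoG lam k| ≤ 1 * 1 := by gcongr; linarith
  linarith

open ComplexConjugate in
theorem coef1 {u : ℂ} (hu : ‖u‖ = 1) {lam : ℝ} (hl : 0 ≤ lam) (k : ℕ) :
    conj (ak u lam k) * ak u lam k + conj (bk u k) * bk u k * ((k*(k+2*lam)/(2*(k+lam))^2 : ℝ) : ℂ) = 1 := by
  have hu' : conj u * u = 1 := by rw [Complex.conj_mul', hu]; simp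
  have he : conj ((-1:ℂ)^k) = (-1)^k := by simp
  have he2 : ((-1:ℂ)^k) * (-1)^k = 1 := by rw [← pow_add, ← two_mul, pow_mul]; simp
  have hr : ((k*(k+2*lam)/(2*(k+lam))^2 : ℝ) : ℂ) = (1 - ((rhoG lam k : ℝ):ℂ)^2)/4 := by
    have : (k*(k+2*lam)/(2*(k+lam))^2 : ℝ) = (1 - (rhoG lam k)^2)/4 := by
      unfold rhoG
      split_ifs with h
      · subst h; simp
      · have hk : (0:ℝ) < k := by exact_mod_cast Nat.pos_of_ne_zero h
        have h0 : (k:ℝ) + lam ≠ 0 := by positivity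
        field_simp
        ring
    rw [this]; push_cast; ring
  rw [hr, ak, bk]
  simp only [map_sub, map_mul, map_div₀, map_add, map_neg, he, Complex.conj_ofReal, Complex.conj_ofNat]
  generalize (-1:ℂ)^k = ε at *
  generalize ((rhoG lam k : ℝ):ℂ) = ρ at *
  linear_combination (1/2 - ρ/2)*hu' + (1/2+ρ/2) * he2

open ComplexConjugate in
theorem coef2 {u : ℂ} (hu : ‖u‖ = 1) {lam : ℝ} (k : ℕ) (w : ℝ) :
    (conj (bk u k) * ak u lam k + conj (ak u lam k) * bk u k + conj (bk u k) * bk u k * ((lam/(k+lam) : ℝ) : ℂ)) *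
      ((Dg lam k w : ℝ) : ℂ) = 0 := by
  by_cases h : k = 0
  · subst h; simp [Dg]
  have hr : (lam/(k+lam) : ℝ) = rhoG lam k := by rw [rhoG, if_neg h]
  have hu' : conj u * u = 1 := by rw [Complex.conj_mul', hu]; simp
  have he : conj ((-1:ℂ)^k) = (-1)^k := by simp
  have he2 : ((-1:ℂ)^k) * (-1)^k = 1 := by rw [← pow_add, ← two_mul, pow_mul]; simp
  rw [hr, ak, bk]
  simp only [map_sub, map_mul, map_div₀, map_add, map_neg, he, Complex.conj_ofReal, Complex.conj_ofNat]
  generalize (-1:ℂ)^k = ε at *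
  generalize ((rhoG lam k : ℝ):ℂ) = ρ at *
  linear_combination ((Dg lam k w : ℝ) : ℂ) * hu' - ((Dg lam k w : ℝ) : ℂ) * he2

/-- scalar terms -/
def tZ (lam : ℝ) (k : ℕ) (z s : ℝ) : ℝ := 2^lam * Real.Gamma (lam+1) * Jk lam k z * gegT lam k s
/-- bivector terms -/
def tD (lam : ℝ) (k : ℕ) (z s : ℝ) : ℝ := 2^lam * Real.Gamma (lam+1) * Jk lam k z * Dg lam k s

/-- common majorant -/
def mj (lam : ℝ) (z : ℝ) (k : ℕ) : ℝ := maj lam (Real.exp (z^2) * (2*(4*(2+lam)))) k z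

theorem mj_nonneg {lam : ℝ} (hl : 0 ≤ lam) (z : ℝ) (k : ℕ) : 0 ≤ mj lam z k := by
  unfold mj maj; positivity

theorem mj_summable (lam z : ℝ) : Summable (mj lam z) := maj_summable _ _ _

theorem tZ_bound {lam : ℝ} (hl : 0 ≤ lam) (k : ℕ) (z : ℝ) {s : ℝ} (hs : |s| ≤ 1) :
    |tZ lam k z s| ≤ mj lam z k := by
  refine maj_bound hl z k _ _ (by positivity) ?_
  refine (gegT_bound hl hs k).trans (le_of_eq ?_)
  rw [pow_succ]; ring

theorem tD_bound {lam : ℝ} (hl : 0 ≤ lam) (k : ℕ) (z : ℝ) {s : ℝ} (hs : |s| ≤ 1) :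
    |tD lam k z s| ≤ mj lam z k := by
  refine maj_bound hl z k _ _ (by positivity) ?_
  refine (Dg_bound hl hs k).trans ?_
  have : (0:ℝ) ≤ (4*(2+lam))^k := by positivity
  nlinarith

theorem sum_aux {lam : ℝ} {z : ℝ} {c : ℕ → ℂ} {t : ℕ → ℝ} {D : ℝ} (hc : ∀ k, ‖c k‖ ≤ D)
    (ht : ∀ k, |t k| ≤ mj lam z k) : Summable fun k => c k * (t k : ℂ) := by
  refine Summable.of_norm_bounded ((mj_summable lam z).mul_left D) fun k => ?_
  rw [norm_mul, Complex.norm_real, Real.norm_eq_abs]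
  exact mul_le_mul (hc k) (ht k) (abs_nonneg _) ((norm_nonneg _).trans (hc k))

theorem half_pow (lam : ℝ) : (2:ℝ)^(lam-1) = 2^lam/2 := by
  rw [Real.rpow_sub_one (by norm_num)]

theorem AB_hasSum {u : ℂ} (hu : ‖u‖ = 1) {lam : ℝ} (hl : 0 ≤ lam) (z : ℝ) {s : ℝ} (hs : |s| ≤ 1) :
    HasSum (fun k => ak u lam k * (tZ lam k z s : ℂ)) (AfunR u lam s z + BfunR u lam s z) := by
  have h1 : Summable fun k => ((u + (-1:ℂ)^k)/2 * (rhoG lam k:ℝ)) * (tZ lam k z s : ℂ) := by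
    refine sum_aux (D := 1) (fun k => ?_) (fun k => tZ_bound hl k z hs)
    have h1 : ‖u + (-1:ℂ)^k‖ ≤ 2 := by
      refine (norm_add_le _ _).trans ?_
      rw [hu, eps_norm]; norm_num
    rw [norm_mul, norm_div, Complex.norm_real, Complex.norm_ofNat, Real.norm_eq_abs]
    have h3 := rho_abs hl k
    have : ‖u + (-1:ℂ)^k‖/2 * |rhoG lam k| ≤ 1 * 1 := by gcongr; linarith
    linarith
  have h2 : Summable fun k => ((u - (-1:ℂ)^k)/2) * (tZ lam k z s : ℂ) := by
    refine sum_aux (D := 1) (fun k => ?_) (fun k => tZ_bound hl k z hs)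
    have h1 : ‖u - (-1:ℂ)^k‖ ≤ 2 := by
      refine (norm_sub_le _ _).trans ?_
      rw [hu, eps_norm]; norm_num
    rw [norm_div, Complex.norm_ofNat]
    linarith
  have h := h1.hasSum.sub h2.hasSum
  have e1 : AfunR u lam s z = ∑' k, ((u + (-1:ℂ)^k)/2 * (rhoG lam k:ℝ)) * (tZ lam k z s : ℂ) := by
    rw [AfunR, ← tsum_mul_left]
    refine tsum_congr fun k => ?_
    rw [geg_rho hl, half_pow, tZ, Jk]; push_cast; ring
  have e2 : BfunR u lam s z = - ∑' k, ((u - (-1:ℂ)^k)/2) * (tZ lam k z s : ℂ) := by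
    rw [BfunR, neg_mul, ← tsum_mul_left]
    congr 1
    refine tsum_congr fun k => ?_
    rw [half_pow, tZ, Jk]; push_cast; ring
  rw [e1, e2, ← sub_eq_add_neg]
  have e3 : (fun k => ak u lam k * (tZ lam k z s : ℂ)) = fun k =>
      ((u + (-1:ℂ)^k)/2 * (rhoG lam k:ℝ)) * (tZ lam k z s : ℂ) - ((u - (-1:ℂ)^k)/2) * (tZ lam k z s : ℂ) := by
    funext k; rw [ak]; ring
  rw [e3]; exact h

theorem C_hasSum {u : ℂ} (hu : ‖u‖ = 1) {lam : ℝ} (hl : 0 ≤ lam) (z : ℝ) {s : ℝ} (hs : |s| ≤ 1) :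
    HasSum (fun k => bk u k * (tD lam k z s : ℂ)) (z * CfunR u lam s z) := by
  have h1 : Summable fun k => bk u k * (tD lam k z s : ℂ) :=
    sum_aux (fun k => bk_norm hu k) (fun k => tD_bound hl k z hs)
  have e1 : (z:ℂ) * CfunR u lam s z = ∑' k, bk u k * (tD lam k z s : ℂ) := by
    rw [CfunR, ← mul_assoc, ← tsum_mul_left]
    refine tsum_congr fun k => ?_
    rw [tD, Jk, bk, Dg]
    split_ifs with h
    · have : z^k = z * z^(k-1) := by rw [← pow_succ']; congr 1; omega
      rw [this]; push_cast; ring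
    · simp
  rw [e1]; exact h1.hasSum


/-! ### Assembly -/

section asm
attribute [local instance] clRing clAlg clNS
attribute [local instance 5000] rNS rMod rSM

theorem ip_smul_right (c : ℝ) (x z : Fin m → ℝ) : ip x (c • z) = c * ip x z := by
  rw [ip_comm, ip_smul_left, ip_comm]

theorem co_smul (a : ℝ) (p : EE m) : co (a • p) = a • co p := rfl

theorem wd_smul_right (c : ℝ) (p q : EE m) : wd p (c • q) = c • wd p q := by
  rw [wd_anti, wd_smul_left, wd_anti p q, smul_neg]

theorem nrm_co (p : EE m) : nrm (co p) = ‖p‖ := by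
  rw [nrm, co_ip, real_inner_self_eq_norm_sq, Real.sqrt_sq (norm_nonneg _)]

theorem Kminus_form (p q : EE m) (hp : ‖p‖ = 1) (hq : ‖q‖ = 1) (a b : ℝ) (ha : 0 < a) (hb : 0 < b) :
    Kminus m (co (a • p)) (co (b • q)) =
      (AfunR (Complex.I ^ m) (((m:ℝ) - 2)/2) (inner ℝ p q) (a*b) +
        BfunR (Complex.I ^ m) (((m:ℝ) - 2)/2) (inner ℝ p q) (a*b)) • (1 : Cl m) +
      (((a*b:ℝ):ℂ) * CfunR (Complex.I ^ m) (((m:ℝ) - 2)/2) (inner ℝ p q) (a*b)) • wd p q := by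
  have h1 : nrm (co (a • p)) = a := by rw [nrm_co, norm_smul, hp, mul_one, Real.norm_of_nonneg ha.le]
  have h2 : nrm (co (b • q)) = b := by rw [nrm_co, norm_smul, hq, mul_one, Real.norm_of_nonneg hb.le]
  have h3 : ip (co (a • p)) (co (b • q)) / (a * b) = inner ℝ p q := by
    rw [co_ip, real_inner_smul_left, real_inner_smul_right]; field_simp
  have h4 : wedge m (co (a • p)) (co (b • q)) = ((a*b:ℝ):ℂ) • wd p q := by
    rw [wedge_eq]
    have : wd (a • p) (b • q) = ((a*b:ℝ):ℂ) • wd p q := by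
      rw [wd_smul_left, wd_smul_right, smul_smul, rsmul_eq]
    exact this
  rw [Kminus, h1, h2, h3, h4, smul_smul, mul_comm (CfunR _ _ _ _)]

theorem cconj_add (a b : Cl m) : cconj (a + b) = cconj a + cconj b :=
  cl_ext fun S => map_add (starRingEnd ℂ) _ _
theorem cconj_smul (c : ℂ) (a : Cl m) : cconj (c • a) = (starRingEnd ℂ c) • cconj a :=
  cl_ext fun S => map_mul (starRingEnd ℂ) _ _
theorem cconj_zero : cconj (0 : Cl m) = 0 := cl_ext fun S => map_zero (starRingEnd ℂ)
theorem coeff_cconj (a : Cl m) (S) : coeff (cconj a) S = starRingEnd ℂ (coeff a S) := rfl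
theorem cconj_one : cconj (1 : Cl m) = 1 := cl_ext fun S => by
  rw [coeff_cconj, coeff_one]; split_ifs <;> simp
theorem cconj_ee (i j : Fin m) : cconj (e m i * e m j) = e m i * e m j := cl_ext fun S => by
  rw [coeff_cconj, e_mul_e, chi]; split_ifs <;> simp
theorem cconj_sum {ι : Type*} (s : Finset ι) (f : ι → Cl m) : cconj (∑ i ∈ s, f i) = ∑ i ∈ s, cconj (f i) := by
  classical
  induction s using Finset.induction_on with
  | empty => simp [cconj_zero]
  | insert a s ha ih => rw [Finset.sum_insert ha, Finset.sum_insert ha, cconj_add, ih]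

theorem cconj_wd (p q : EE m) : cconj (wd p q) = wd p q := by
  have h : wd p q = wedge m (co p) (co q) := (wedge_eq _ _).symm
  rw [h, wedge, cconj_sum]
  refine Finset.sum_congr rfl fun i _ => ?_
  rw [cconj_sum]
  refine Finset.sum_congr rfl fun j _ => ?_
  split_ifs
  · rw [cconj_smul, cconj_ee, Complex.conj_ofReal]
  · exact cconj_zero

theorem wd_bdd (W : SS m → Cl m) (hW : Continuous W) : ∃ M : ℝ, 0 ≤ M ∧ ∀ η, ‖W η‖ ≤ M := by
  obtain ⟨M, hM⟩ := (isCompact_range hW).isBounded.exists_norm_le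
  exact ⟨max M 0, le_max_right _ _, fun η => (hM _ ⟨η, rfl⟩).trans (le_max_left _ _)⟩

/-- terms of the kernel expansions -/
def kt (lam : ℝ) (a b : ℕ → ℂ) (z : ℝ) (X : EE m) (W : SS m → Cl m) (k : ℕ) (η : SS m) : Cl m :=
  (a k * (tZ lam k z (inner ℝ X (η : EE m)) : ℝ)) • (1 : Cl m) +
    (b k * (tD lam k z (inner ℝ X (η : EE m)) : ℝ)) • W η

theorem kt_cont (lam : ℝ) (a b : ℕ → ℂ) (z : ℝ) (X : EE m) (W : SS m → Cl m) (hW : Continuous W) (k : ℕ) :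
    Continuous (kt lam a b z X W k) := by
  have c1 := cont_comp_inner (continuous_Dg lam k) X
  have c2 := cont_comp_inner (continuous_gegT lam k) X
  unfold kt tZ tD
  fun_prop

theorem kt_bound {lam : ℝ} (hl : 0 ≤ lam) (a b : ℕ → ℂ) (ha : ∀ k, ‖a k‖ ≤ 2) (hb : ∀ k, ‖b k‖ ≤ 2)
    (z : ℝ) (X : EE m) (hX : ‖X‖ = 1) (W : SS m → Cl m) (M : ℝ) (hW : ∀ η, ‖W η‖ ≤ M)
    (k : ℕ) (η : SS m) : ‖kt lam a b z X W k η‖ ≤ (2 * (‖(1 : Cl m)‖ + M)) * mj lam z k := by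
  have hs := inner_abs_le X hX η
  have hj := mj_nonneg hl z k
  rw [kt]
  refine (norm_add_le _ _).trans ?_
  rw [norm_smul, norm_smul, norm_mul, norm_mul, Complex.norm_real, Complex.norm_real, Real.norm_eq_abs,
    Real.norm_eq_abs]
  have h1 : ‖a k‖ * |tZ lam k z (inner ℝ X (η : EE m))| ≤ 2 * mj lam z k :=
    mul_le_mul (ha k) (tZ_bound hl k z hs) (abs_nonneg _) (by norm_num)
  have h2 : ‖b k‖ * |tD lam k z (inner ℝ X (η : EE m))| ≤ 2 * mj lam z k :=
    mul_le_mul (hb k) (tD_bound hl k z hs) (abs_nonneg _) (by norm_num)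
  have h3 : ‖a k‖ * |tZ lam k z (inner ℝ X (η : EE m))| * ‖(1 : Cl m)‖ ≤ 2 * mj lam z k * ‖(1 : Cl m)‖ :=
    mul_le_mul_of_nonneg_right h1 (norm_nonneg _)
  have h4 : ‖b k‖ * |tD lam k z (inner ℝ X (η : EE m))| * ‖W η‖ ≤ 2 * mj lam z k * M :=
    mul_le_mul h2 (hW η) (norm_nonneg _) (by positivity)
  linarith

theorem kt_sum {lam : ℝ} (a b : ℕ → ℂ) (z : ℝ) (X : EE m) (W : SS m → Cl m) (η : SS m) {α β : ℂ}
    (hα : HasSum (fun k => a k * (tZ lam k z (inner ℝ X (η : EE m)) : ℂ)) α)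
    (hβ : HasSum (fun k => b k * (tD lam k z (inner ℝ X (η : EE m)) : ℂ)) β) :
    HasSum (fun k => kt lam a b z X W k η) (α • (1 : Cl m) + β • W η) :=
  (hα.smul_const _).add (hβ.smul_const _)

theorem conj_sum {c : ℕ → ℂ} {t : ℕ → ℝ} {α : ℂ} (h : HasSum (fun k => c k * (t k : ℂ)) α) :
    HasSum (fun k => (starRingEnd ℂ) (c k) * (t k : ℂ)) ((starRingEnd ℂ) α) := by
  have := h.mapL (Complex.conjCLE : ℂ →L[ℝ] ℂ)
  simpa using this

open ComplexConjugate in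
theorem kt_int (hm : 2 ≤ m) {lam : ℝ} (hl : 0 ≤ lam) (hlm : 2*lam+1 = (m:ℝ)-1) {u : ℂ} (hu : ‖u‖ = 1)
    (X Y : EE m) (hX : ‖X‖ = 1) (hY : ‖Y‖ = 1) (z z' : ℝ) (k l : ℕ) :
    ∫ η : SS m, mulL (kt lam (fun k => conj (ak u lam k)) (fun k => conj (bk u k)) z X (fun η => wd (η : EE m) X) k η)
      (kt lam (fun k => ak u lam k) (fun k => bk u k) z' Y (fun η => wd Y (η : EE m)) l η) ∂om m =
      if k = l then (((2^lam * Real.Gamma (lam+1))^2 * (Jk lam k z * Jk lam k z') *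
      gegT lam k (inner ℝ X Y) : ℝ) : ℂ) • (1 : Cl m) else 0 := by
  set c : ℝ := 2^lam * Real.Gamma (lam+1) with hc
  have h := prod_int hm hl hlm k l X Y hX hY (conj (ak u lam k) * (c * Jk lam k z : ℝ))
    (conj (bk u k) * (c * Jk lam k z : ℝ)) (ak u lam l * (c * Jk lam l z' : ℝ)) (bk u l * (c * Jk lam l z' : ℝ))
  have e1 : ∀ η : SS m, mulL (kt lam (fun k => conj (ak u lam k)) (fun k => conj (bk u k)) z X (fun η => wd (η : EE m) X) k η)
      (kt lam (fun k => ak u lam k) (fun k => bk u k) z' Y (fun η => wd Y (η : EE m)) l η) =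
      ((conj (ak u lam k) * (c * Jk lam k z : ℝ) * (gegT lam k (inner ℝ X (η:EE m)) : ℝ)) • (1 : Cl m) +
        (conj (bk u k) * (c * Jk lam k z : ℝ) * (Dg lam k (inner ℝ X (η:EE m)) : ℝ)) • wd (η : EE m) X) *
      ((ak u lam l * (c * Jk lam l z' : ℝ) * (gegT lam l (inner ℝ Y (η:EE m)) : ℝ)) • (1 : Cl m) +
        (bk u l * (c * Jk lam l z' : ℝ) * (Dg lam l (inner ℝ Y (η:EE m)) : ℝ)) • wd Y (η : EE m)) := by
    intro η
    rw [mulL_apply]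
    simp only [kt, tZ, tD, ← hc, mul_assoc, Complex.ofReal_mul]
  simp only [e1]
  rw [h]
  by_cases hk : k = l
  · subst hk
    rw [if_pos rfl, if_pos rfl]
    have g1 := coef1 hu hl k
    have g2 := coef2 (lam := lam) hu k (inner ℝ X Y)
    have k1 : (conj (ak u lam k) * (c * Jk lam k z : ℝ) * (ak u lam k * (c * Jk lam k z' : ℝ)) +
        conj (bk u k) * (c * Jk lam k z : ℝ) * (bk u k * (c * Jk lam k z' : ℝ)) *
          ((k*(k+2*lam)/(2*(k+lam))^2 : ℝ) : ℂ)) * (gegT lam k (inner ℝ X Y) : ℝ) =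
        ((c^2 * (Jk lam k z * Jk lam k z') * gegT lam k (inner ℝ X Y) : ℝ) : ℂ) := by
      generalize ((k*(k+2*lam)/(2*(k+lam))^2 : ℝ) : ℂ) = R at *
      push_cast
      linear_combination ((c:ℂ)^2 * (Jk lam k z * Jk lam k z') * gegT lam k (inner ℝ X Y)) * g1
    have k2 : (conj (bk u k) * (c * Jk lam k z : ℝ) * (ak u lam k * (c * Jk lam k z' : ℝ)) +
        conj (ak u lam k) * (c * Jk lam k z : ℝ) * (bk u k * (c * Jk lam k z' : ℝ)) +
        conj (bk u k) * (c * Jk lam k z : ℝ) * (bk u k * (c * Jk lam k z' : ℝ)) * ((lam/(k+lam) : ℝ):ℂ)) *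
          (Dg lam k (inner ℝ X Y) : ℝ) = 0 := by
      generalize ((lam/(k+lam) : ℝ):ℂ) = R at *
      push_cast
      linear_combination ((c:ℂ)^2 * (Jk lam k z * Jk lam k z')) * g2
    rw [k1, k2, zero_smul, add_zero]
  · rw [if_neg hk, if_neg hk]

open ComplexConjugate in
theorem main_unit (hm : 2 ≤ m) (X Y : EE m) (hX : ‖X‖ = 1) (hY : ‖Y‖ = 1) (a b r : ℝ) (ha : 0 < a) (hb : 0 < b)
    (hr : 0 < r) :
    ∫ η : SS m, cconj (Kminus m (co (r • (η : EE m))) (co (a • X))) * Kminus m (co (b • Y)) (co (r • (η : EE m))) ∂om m =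
      ((2:ℝ) ^ (((m:ℝ) - 2)/2) * Real.Gamma (((m:ℝ) - 2)/2 + 1)
          * besselJt (((m:ℝ) - 2)/2) ‖(r*a) • X - (r*b) • Y‖ : ℝ) • (1 : Cl m) := by
  set lam : ℝ := ((m:ℝ)-2)/2 with hlam
  have hm' : (2:ℝ) ≤ m := by exact_mod_cast hm
  have hl : 0 ≤ lam := by rw [hlam]; linarith
  have hlm : 2*lam+1 = (m:ℝ)-1 := by rw [hlam]; ring
  set u : ℂ := Complex.I ^ m with hu0
  have hu : ‖u‖ = 1 := by rw [hu0, norm_pow, Complex.norm_I, one_pow]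
  obtain ⟨M, hM0, hM⟩ := wd_bdd (fun η : SS m => wd (η : EE m) X) (wd_cont_left X)
  obtain ⟨N, hN0, hN⟩ := wd_bdd (fun η : SS m => wd Y (η : EE m)) (wd_cont_right Y)
  have hη : ∀ η : SS m, ‖(η : EE m)‖ = 1 := fun η => by simpa using η.2
  have key := double_swap hm mulL
    (kt lam (fun k => conj (ak u lam k)) (fun k => conj (bk u k)) (r*a) X (fun η => wd (η : EE m) X))
    (fun η => cconj (Kminus m (co (r • (η : EE m))) (co (a • X)))) _
    (kt_cont lam _ _ _ X _ (wd_cont_left X))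
    (kt_bound hl _ _ (fun k => by rw [RCLike.norm_conj]; exact ak_norm hu hl k)
      (fun k => by rw [RCLike.norm_conj]; exact bk_norm hu k) (r*a) X hX _ M hM)
    ((mj_summable _ _).mul_left _) ?_
    (kt lam (fun k => ak u lam k) (fun k => bk u k) (b*r) Y (fun η => wd Y (η : EE m)))
    (fun η => Kminus m (co (b • Y)) (co (r • (η : EE m)))) _
    (kt_cont lam _ _ _ Y _ (wd_cont_right Y))
    (kt_bound hl _ _ (fun k => ak_norm hu hl k) (fun k => bk_norm hu k) (b*r) Y hY _ N hN)
    ((mj_summable _ _).mul_left _) ?_ _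
    (kt_int hm hl hlm hu X Y hX hY (r*a) (b*r))
  · have add := (addition hm hl hlm (r*a) (b*r) X Y hX hY).smul_const (1 : Cl m)
    have := key.unique add
    rw [← rsmul_eq, mul_comm b r] at this
    exact this
  · intro η
    rw [Kminus_form _ _ (hη η) hX r a hr ha, cconj_add, cconj_smul, cconj_smul, cconj_one, cconj_wd]
    have hs := inner_abs_le X hX η
    rw [real_inner_comm X (η : EE m)]
    exact kt_sum _ _ _ X (fun η => wd (η : EE m) X) η (conj_sum (AB_hasSum hu hl (r*a) hs))
      (conj_sum (C_hasSum hu hl (r*a) hs))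
  · intro η
    rw [Kminus_form _ _ hY (hη η) b r hb hr]
    have hs := inner_abs_le Y hY η
    exact kt_sum _ _ _ Y (fun η => wd Y (η : EE m)) η (AB_hasSum hu hl (b*r) hs) (C_hasSum hu hl (b*r) hs)

end asm


/-- The key reproducing identity: for all `x, y ≠ 0` and `r > 0`,
`∫_{S^{m-1}} conj(K_-(rη, x)) K_-(y, rη) dω(η) = 2^λ Γ(λ+1) u^{-λ} J_λ(u)`
with `u = r√(|x|² + |y|² - 2⟨x,y⟩) = r|x-y|`, where `ω` is the rotation-invariant
probability measure on the unit sphere (the normalized surface measure), and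
`u^{-λ}J_λ(u)` is the entire function `J̃_λ(u)`. -/
theorem sphere_integral_kernel_kernel (m : ℕ) (hm : 2 ≤ m)
    (x y : Fin m → ℝ) (hx : x ≠ 0) (hy : y ≠ 0) (r : ℝ) (hr : 0 < r)
    (u : ℝ) (hu : u = r * Real.sqrt (ip x x + ip y y - 2 * ip x y)) :
    (∫ η : Metric.sphere (0 : EuclideanSpace ℝ (Fin m)) 1,
        cconj (Kminus m (fun i => r * (η : EuclideanSpace ℝ (Fin m)) i) x)
          * Kminus m y (fun i => r * (η : EuclideanSpace ℝ (Fin m)) i)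
      ∂(((volume : Measure (EuclideanSpace ℝ (Fin m))).toSphere Set.univ)⁻¹ •
          (volume : Measure (EuclideanSpace ℝ (Fin m))).toSphere))
      = (((2:ℝ) ^ (((m:ℝ) - 2)/2) * Real.Gamma (((m:ℝ) - 2)/2 + 1)
          * besselJt (((m:ℝ) - 2)/2) u : ℝ)) • (1 : Cl m) := by
  have ex : ∀ v : Fin m → ℝ, v ≠ 0 → ∃ (X : EE m) (a : ℝ), ‖X‖ = 1 ∧ 0 < a ∧ v = co (a • X) := by
    intro v hv
    have h0 : (WithLp.toLp 2 v : EE m) ≠ 0 := by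
      intro h
      exact hv (funext fun i => congrArg (fun p : EE m => p i) h)
    have h1 : ‖(WithLp.toLp 2 v : EE m)‖ ≠ 0 := norm_ne_zero_iff.2 h0
    refine ⟨‖(WithLp.toLp 2 v : EE m)‖⁻¹ • WithLp.toLp 2 v, ‖(WithLp.toLp 2 v : EE m)‖, ?_, norm_pos_iff.2 h0, ?_⟩
    · rw [norm_smul, norm_inv, norm_norm, inv_mul_cancel₀ h1]
    · rw [smul_smul, mul_inv_cancel₀ h1, one_smul]; rfl
  obtain ⟨X, a, hX, ha, rfl⟩ := ex x hx
  obtain ⟨Y, b, hY, hb, rfl⟩ := ex y hy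
  have hn : ‖(r*a) • X - (r*b) • Y‖ = u := by
    rw [mul_smul, mul_smul, ← smul_sub, norm_smul, Real.norm_of_nonneg hr.le, hu, co_ip, co_ip, co_ip,
      real_inner_self_eq_norm_sq, real_inner_self_eq_norm_sq,
      ← Real.sqrt_sq (norm_nonneg (a • X - b • Y)), norm_sub_sq_real]
    congr 2; ring
  have h := main_unit hm X Y hX hY a b r ha hb hr
  rw [hn] at h
  exact h

end CliffordFourier
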